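/- arXiv:1501.01498 — 6 statements merged into one kernel-verified Lean document; each statement's English description precedes it below -/
import Mathlib

section
/- Let n ≥ 1 and let λ̄₁, …, λ̄ₙ be real numbers. Let k̲, k̄ ∈ {1, …, n} with k̲ < k̄ be such that for every j ∈ {k̲, …, k̄ − 1} the stability condition (1/(j − k̲ + 1)) Σ_{k=k̲}^{j} λ̄ₖ ≥ (1/(k̄ − j)) Σ_{k=j+1}^{k̄} λ̄ₖ holds. Then for all k̲′, k̄′ with k̲ ≤ k̲′ < k̄′ ≤ k̄ one has (1/(k̲′ − k̲ + 1)) Σ_{k=k̲}^{k̲′} λ̄ₖ ≥ (1/(k̄ − k̄′ + 1)) Σ_{k=k̄′}^{k̄} λ̄ₖ. -/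
theorem aux_avg (a b A B : ℝ) (ha : 0 < a) (hb : 0 < b) (h : 1 / a * A ≥ 1 / b * B) :
    (A + B) / (a + b) ≤ 1 / a * A ∧ 1 / b * B ≤ (A + B) / (a + b) := by
  have h' : B / b ≤ A / a := by simpa [div_eq_inv_mul] using h
  rw [div_le_div_iff₀ hb ha] at h'
  rw [one_div_mul_eq_div, one_div_mul_eq_div]
  constructor
  · rw [div_le_div_iff₀ (by positivity) ha]; nlinarith
  · rw [div_le_div_iff₀ hb (by positivity)]; nlinarith

theorem aux_split (lam : ℕ → ℝ) (p j q : ℕ) (h1 : p ≤ j) (h2 : j < q) :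
    ∑ k ∈ Finset.Icc p j, lam k + ∑ k ∈ Finset.Icc (j + 1) q, lam k
      = ∑ k ∈ Finset.Icc p q, lam k := by
  rw [← Finset.sum_union]
  · congr 1
    ext x
    simp only [Finset.mem_union, Finset.mem_Icc]
    omega
  · rw [Finset.disjoint_left]
    intro x
    simp only [Finset.mem_Icc]
    omega

/-- **Extension of the stability condition** (Lemma, Sticky Particle Dynamics):
if the stability condition holds for all intermediate splitting points of a cluster
`{k̲, …, k̄}`, then the average initial velocity of any leftmost piece dominates the
average initial velocity of any rightmost piece. -/
theorem stability_extension (n : ℕ) (hn : 1 ≤ n) (lam : ℕ → ℝ)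
    (ku kb : ℕ) (hku : 1 ≤ ku) (hkb : kb ≤ n) (hlt : ku < kb)
    (hstab : ∀ j : ℕ, ku ≤ j → j < kb →
      (1 / ((j : ℝ) - (ku : ℝ) + 1)) * ∑ k ∈ Finset.Icc ku j, lam k ≥
        (1 / ((kb : ℝ) - (j : ℝ))) * ∑ k ∈ Finset.Icc (j + 1) kb, lam k) :
    ∀ ku' kb' : ℕ, ku ≤ ku' → ku' < kb' → kb' ≤ kb →
      (1 / ((ku' : ℝ) - (ku : ℝ) + 1)) * ∑ k ∈ Finset.Icc ku ku', lam k ≥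
        (1 / ((kb : ℝ) - (kb' : ℝ) + 1)) * ∑ k ∈ Finset.Icc kb' kb, lam k := by
  intro p q h1 h2 h3
  obtain ⟨r, rfl⟩ : ∃ r, q = r + 1 := ⟨q - 1, by omega⟩
  have key : ∀ j : ℕ, ku ≤ j → j < kb →
      (∑ k ∈ Finset.Icc ku kb, lam k) / ((kb : ℝ) - ku + 1) ≤
        (1 / ((j : ℝ) - (ku : ℝ) + 1)) * ∑ k ∈ Finset.Icc ku j, lam k ∧
      (1 / ((kb : ℝ) - (j : ℝ))) * ∑ k ∈ Finset.Icc (j + 1) kb, lam k ≤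
        (∑ k ∈ Finset.Icc ku kb, lam k) / ((kb : ℝ) - ku + 1) := by
    intro j hj1 hj2
    have e1 : (ku : ℝ) ≤ j := by exact_mod_cast hj1
    have e2 : (j : ℝ) < kb := by exact_mod_cast hj2
    have := aux_avg _ _ _ _ (by linarith) (by linarith) (hstab j hj1 hj2)
    rw [aux_split lam ku j kb hj1 hj2,
      show (j : ℝ) - ku + 1 + (kb - j) = kb - ku + 1 by ring] at this
    exact this
  have a1 := (key p h1 (by omega)).1
  have a2 := (key r (by omega) (by omega)).2
  have e : (kb : ℝ) - ((r + 1 : ℕ) : ℝ) + 1 = kb - r := by push_cast; ring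
  rw [e]
  exact le_trans a2 a1
end

section
/- Let ℓ : [0,1] × ℝ → ℝ be a bounded measurable function and let F be the CDF of a Borel probability measure m on ℝ. Then ∫_ℝ ( ∫₀¹ ℓ((1 − θ)F(x⁻) + θF(x), x) dθ ) m(dx) = ∫₀¹ ℓ(v, F⁻¹(v)) dv. -/
open MeasureTheory Set Filter

lemma aux_null (m : Measure ℝ) [IsProbabilityMeasure m] :
    ∀ᵐ x ∂m, ∀ y < x, ProbabilityTheory.cdf m y < ProbabilityTheory.cdf m x := by
  set F := ProbabilityTheory.cdf m with hF
  have hIoc : ∀ a b, F b ≤ F a → m (Ioc a b) = 0 := by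
    intro a b h
    rw [← ProbabilityTheory.measure_cdf m, StieltjesFunction.measure_Ioc]
    simpa using h
  have key : ∀ q : ℚ, ∀ᵐ x ∂m, ¬ ((q:ℝ) < x ∧ F x ≤ F q) := by
    intro q
    rw [ae_iff]
    simp only [not_not]
    apply measure_null_of_locally_null
    rintro x ⟨hx, hx'⟩
    by_cases h : ∃ z, x < z ∧ F z ≤ F q
    · obtain ⟨z, hz, hz'⟩ := h
      refine ⟨Ioc q z, mem_nhdsWithin_of_mem_nhds (Ioc_mem_nhds hx hz), hIoc _ _ hz'⟩
    · push Not at h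
      refine ⟨Ioc q x, ?_, hIoc _ _ hx'⟩
      apply mem_of_superset self_mem_nhdsWithin
      rintro w ⟨hw, hw'⟩
      refine ⟨hw, ?_⟩
      by_contra hc
      exact absurd hw' (not_le.2 (h w (not_le.1 hc)))
  filter_upwards [ae_all_iff.2 key] with x hx y hy
  obtain ⟨q, hq, hq'⟩ := exists_rat_btwn hy
  have := hx q
  push Not at this
  exact (F.mono hq.le).trans_lt (this hq')

lemma aux_bdd (m : Measure ℝ) [IsProbabilityMeasure m] {u : ℝ} (hu : 0 < u) :
    BddBelow {x : ℝ | u ≤ ProbabilityTheory.cdf m x} := by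
  obtain ⟨a, ha⟩ := ((ProbabilityTheory.tendsto_cdf_atBot m).eventually (gt_mem_nhds hu)).exists
  refine ⟨a, fun x hx => ?_⟩
  by_contra hc
  have := ProbabilityTheory.monotone_cdf m (not_le.1 hc).le
  simp only [mem_setOf_eq] at hx
  linarith

lemma aux_ne (m : Measure ℝ) [IsProbabilityMeasure m] {u : ℝ} (hu : u < 1) :
    {x : ℝ | u ≤ ProbabilityTheory.cdf m x}.Nonempty := by
  obtain ⟨a, ha⟩ := ((ProbabilityTheory.tendsto_cdf_atTop m).eventually (lt_mem_nhds hu)).exists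
  exact ⟨a, ha.le⟩

lemma aux_mem (m : Measure ℝ) [IsProbabilityMeasure m] {u : ℝ} (hu : u < 1) :
    u ≤ ProbabilityTheory.cdf m (sInf {x : ℝ | u ≤ ProbabilityTheory.cdf m x}) := by
  set F := ProbabilityTheory.cdf m
  set x0 := sInf {x : ℝ | u ≤ F x} with hx0
  have h := (F.right_continuous x0).mono Ioi_subset_Ici_self
  refine ge_of_tendsto h ?_
  filter_upwards [self_mem_nhdsWithin] with y hy
  obtain ⟨z, hz, hzy⟩ := exists_lt_of_csInf_lt (aux_ne m hu) hy
  exact le_trans hz (F.mono hzy.le)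

lemma aux_unif (m : Measure ℝ) [IsProbabilityMeasure m] {u : ℝ} (hu0 : 0 < u) (hu : u < 1) :
    (m.prod (volume.restrict (Ioo (0:ℝ) 1)))
      {p | (1 - p.2) * Function.leftLim (ProbabilityTheory.cdf m) p.1
        + p.2 * ProbabilityTheory.cdf m p.1 ≤ u} = ENNReal.ofReal u := by
  have hmemx := aux_mem m hu
  have hlt : ∀ x < sInf {x : ℝ | u ≤ ProbabilityTheory.cdf m x},
      ProbabilityTheory.cdf m x < u := fun x hx =>
    not_le.1 (fun h => notMem_of_lt_csInf hx (aux_bdd m hu0) h)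
  have hnull := aux_null m
  have hsing : ∀ x, m {x} = ENNReal.ofReal (ProbabilityTheory.cdf m x -
      Function.leftLim (ProbabilityTheory.cdf m) x) := fun x => by
    conv_lhs => rw [← ProbabilityTheory.measure_cdf m, StieltjesFunction.measure_singleton]
  have hIio : ∀ x, m (Iio x) = ENNReal.ofReal (Function.leftLim (ProbabilityTheory.cdf m) x) :=
    fun x => by
    conv_lhs => rw [← ProbabilityTheory.measure_cdf m,
      StieltjesFunction.measure_Iio _ (ProbabilityTheory.tendsto_cdf_atBot m), sub_zero]
  have hL0 : ∀ x, 0 ≤ Function.leftLim (ProbabilityTheory.cdf m) x := fun x =>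
    (ProbabilityTheory.cdf_nonneg m (x-1)).trans
      ((ProbabilityTheory.monotone_cdf m).le_leftLim (by linarith))
  set F := ProbabilityTheory.cdf m
  set x0 := sInf {x : ℝ | u ≤ F x} with hx0
  set L := Function.leftLim F
  have hLF : ∀ x, L x ≤ F x := fun x => F.mono.leftLim_le le_rfl
  have hFL : ∀ x y, x < y → F x ≤ L y := fun x y h => F.mono.le_leftLim h
  have hLu : L x0 ≤ u := by
    refine le_of_tendsto (F.mono.tendsto_leftLim x0) ?_
    filter_upwards [self_mem_nhdsWithin] with y hy using (hlt y hy).le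
  have hae : {p : ℝ × ℝ | (1 - p.2) * L p.1 + p.2 * F p.1 ≤ u}
      =ᵐ[m.prod (volume.restrict (Ioo (0:ℝ) 1))]
      (Iio x0 ×ˢ univ ∪ {x0} ×ˢ {θ | θ * (F x0 - L x0) ≤ u - L x0} : Set (ℝ × ℝ)) := by
    have h1 : ∀ᵐ p ∂(m.prod (volume.restrict (Ioo (0:ℝ) 1))), ∀ y < p.1, F y < F p.1 :=
      Measure.quasiMeasurePreserving_fst.ae hnull
    have h2 : ∀ᵐ p ∂(m.prod (volume.restrict (Ioo (0:ℝ) 1))), p.2 ∈ Ioo (0:ℝ) 1 :=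
      Measure.quasiMeasurePreserving_snd.ae (ae_restrict_mem measurableSet_Ioo)
    filter_upwards [h1, h2] with p hp1 hp2
    obtain ⟨x, θ⟩ := p
    obtain ⟨ht0, ht1⟩ := hp2
    simp only at hp1 ht0 ht1
    apply propext
    change ((1 - θ) * L x + θ * F x ≤ u) ↔ (((x, θ) : ℝ × ℝ) ∈ (Iio x0 ×ˢ univ ∪ {x0} ×ˢ {θ | θ * (F x0 - L x0) ≤ u - L x0} : Set (ℝ × ℝ)))
    simp only [mem_union, mem_prod, mem_Iio, mem_univ, and_true, mem_singleton_iff, mem_setOf_eq]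
    rcases lt_trichotomy x x0 with h | h | h
    · simp only [h, true_or, iff_true]
      nlinarith [hlt x h, hLF x]
    · subst h
      simp only [lt_irrefl, false_or, true_and]
      constructor <;> intro h <;> linarith
    · simp only [h.not_gt, h.ne', false_or, false_and, iff_false, not_le]
      have a := hp1 x0 h
      have b := hFL x0 x h
      have : 0 < θ * (F x - u) := mul_pos ht0 (by linarith)
      have : 0 ≤ (1-θ) * (L x - u) := mul_nonneg (by linarith) (by linarith)
      linarith
  rw [measure_congr hae, measure_union, Measure.prod_prod, Measure.prod_prod, hIio, hsing]
  · have hv : volume.restrict (Ioo (0:ℝ) 1) univ = 1 := by simp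
    rw [hv, mul_one]
    rcases (hLF x0).eq_or_lt with h | h
    · have : L x0 = u := by linarith
      rw [← h, this]; simp
    · have hd : 0 < F x0 - L x0 := by linarith
      have : volume.restrict (Ioo (0:ℝ) 1) {θ | θ * (F x0 - L x0) ≤ u - L x0}
          = ENNReal.ofReal ((u - L x0) / (F x0 - L x0)) := by
        have hs : {θ | θ * (F x0 - L x0) ≤ u - L x0} = Iic ((u - L x0) / (F x0 - L x0)) := by
          ext θ; simp [le_div_iff₀ hd]
        have hr : (u - L x0) / (F x0 - L x0) ≤ 1 := by rw [div_le_one hd]; linarith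
        rw [hs, Measure.restrict_congr_set Ioo_ae_eq_Ioc, Measure.restrict_apply measurableSet_Iic,
          inter_comm, Ioc_inter_Iic, min_eq_right hr, Real.volume_Ioc, sub_zero]
      rw [this, ← ENNReal.ofReal_mul hd.le, mul_div_cancel₀ _ hd.ne', ← ENNReal.ofReal_add (hL0 _) (by linarith)]
      congr 1; ring
  · rw [Set.disjoint_left]
    rintro ⟨x, θ⟩ h1 h2
    simp only [mem_prod, mem_Iio, mem_singleton_iff] at h1 h2
    exact absurd h1.1 (by simp [h2.1])
  · refine (measurableSet_singleton _).prod ?_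
    exact measurableSet_le (by fun_prop) (by fun_prop)

lemma aux_map (m : Measure ℝ) [IsProbabilityMeasure m] :
    (m.prod (volume.restrict (Ioo (0:ℝ) 1))).map
      (fun p => (1 - p.2) * Function.leftLim (ProbabilityTheory.cdf m) p.1
        + p.2 * ProbabilityTheory.cdf m p.1) = volume.restrict (Ioo (0:ℝ) 1) := by
  have hmF : Measurable (ProbabilityTheory.cdf m) := (ProbabilityTheory.monotone_cdf m).measurable
  have hmL : Measurable (Function.leftLim (ProbabilityTheory.cdf m)) :=
    (ProbabilityTheory.monotone_cdf m).leftLim.measurable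
  have hU : Measurable (fun p : ℝ × ℝ => (1 - p.2) * Function.leftLim (ProbabilityTheory.cdf m) p.1
        + p.2 * ProbabilityTheory.cdf m p.1) := by fun_prop
  haveI : IsProbabilityMeasure (volume.restrict (Ioo (0:ℝ) 1)) := ⟨by simp⟩
  haveI := Measure.isProbabilityMeasure_map (μ := m.prod (volume.restrict (Ioo (0:ℝ) 1))) hU.aemeasurable
  have key : ∀ u, 0 < u → u < 1 → (m.prod (volume.restrict (Ioo (0:ℝ) 1))).map
      (fun p => (1 - p.2) * Function.leftLim (ProbabilityTheory.cdf m) p.1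
        + p.2 * ProbabilityTheory.cdf m p.1) (Iic u) = ENNReal.ofReal u := by
    intro u h0 h1
    rw [Measure.map_apply hU measurableSet_Iic]
    exact aux_unif m h0 h1
  generalize (m.prod (volume.restrict (Ioo (0:ℝ) 1))).map
      (fun p => (1 - p.2) * Function.leftLim (ProbabilityTheory.cdf m) p.1
        + p.2 * ProbabilityTheory.cdf m p.1) = ν at *
  have hvol : ∀ a : ℝ, volume.restrict (Ioo (0:ℝ) 1) (Iic a) = ENNReal.ofReal (min 1 a) := by
    intro a
    rw [Measure.restrict_congr_set Ioo_ae_eq_Ioc, Measure.restrict_apply measurableSet_Iic,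
          inter_comm, Ioc_inter_Iic, Real.volume_Ioc, sub_zero]
  apply Measure.ext_of_Iic
  intro a
  rw [hvol]
  rcases le_or_gt a 0 with h | h
  · rw [ENNReal.ofReal_eq_zero.2 ((min_le_right _ _).trans h)]
    have ht : Tendsto (fun e : ℝ => ENNReal.ofReal e) (nhdsWithin 0 (Ioi 0)) (nhds 0) := by
      have := (ENNReal.continuous_ofReal.tendsto 0).mono_left (nhdsWithin_le_nhds (s := Ioi 0))
      simpa using this
    refine le_antisymm (ge_of_tendsto ht ?_) zero_le
    filter_upwards [Ioo_mem_nhdsGT (zero_lt_one' ℝ)] with e he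
    rw [← key e he.1 he.2]
    exact measure_mono (Iic_subset_Iic.2 (h.trans he.1.le))
  · rcases lt_or_ge a 1 with h1 | h1
    · rw [key a h h1, min_eq_right h1.le]
    · rw [min_eq_left h1, ENNReal.ofReal_one]
      have ht : Tendsto (fun e : ℝ => ENNReal.ofReal e) (nhdsWithin 1 (Iio 1)) (nhds 1) := by
        have := (ENNReal.continuous_ofReal.tendsto 1).mono_left (nhdsWithin_le_nhds (s := Iio 1))
        simpa using this
      refine le_antisymm prob_le_one (le_of_tendsto ht ?_)
      filter_upwards [Ioo_mem_nhdsLT (zero_lt_one' ℝ)] with e he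
      rw [← key e he.1 he.2]
      exact measure_mono (Iic_subset_Iic.2 (he.2.le.trans h1))



/-- **Extended change of variable formula**: for a bounded measurable `ℓ : [0,1] × ℝ → ℝ`
and `F` the CDF of a probability measure `m` on `ℝ`,
`∫_ℝ (∫₀¹ ℓ((1-θ)F(x⁻)+θF(x), x) dθ) m(dx) = ∫₀¹ ℓ(v, F⁻¹(v)) dv`,
where `F(x⁻)` is the left limit of `F` at `x` and `F⁻¹(v) = inf {x | v ≤ F x}`. -/
theorem extended_change_of_variable
    (m : Measure ℝ) [IsProbabilityMeasure m]
    (ℓ : ℝ → ℝ → ℝ)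
    (hmeas : Measurable fun p : ℝ × ℝ => ℓ p.1 p.2)
    (M : ℝ) (hbdd : ∀ v x : ℝ, |ℓ v x| ≤ M)
    (F : ℝ → ℝ) (hF : ∀ x, F x = (m (Iic x)).toReal) :
    ∫ x, (∫ θ in (0:ℝ)..1, ℓ ((1 - θ) * Function.leftLim F x + θ * F x) x) ∂m
      = ∫ v in (0:ℝ)..1, ℓ v (sInf {x : ℝ | v ≤ F x}) := by
  have hFe : F = ProbabilityTheory.cdf m := by
    funext x; rw [hF, ProbabilityTheory.cdf_eq_real]; rfl
  clear hF
  subst hFe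
  have hmF : Measurable (ProbabilityTheory.cdf m) := (ProbabilityTheory.monotone_cdf m).measurable
  have hmL : Measurable (Function.leftLim (ProbabilityTheory.cdf m)) :=
    (ProbabilityTheory.monotone_cdf m).leftLim.measurable
  have hU : Measurable (fun p : ℝ × ℝ => (1 - p.2) * Function.leftLim (ProbabilityTheory.cdf m) p.1
        + p.2 * ProbabilityTheory.cdf m p.1) := by fun_prop
  haveI : IsProbabilityMeasure (volume.restrict (Ioo (0:ℝ) 1)) := ⟨by simp⟩
  have hg : AEMeasurable (fun v : ℝ => sInf {x : ℝ | v ≤ ProbabilityTheory.cdf m x})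
      (volume.restrict (Ioo (0:ℝ) 1)) := by
    apply aemeasurable_restrict_of_monotoneOn measurableSet_Ioo
    intro a ha b hb hab
    exact csInf_le_csInf (aux_bdd m ha.1) (aux_ne m hb.2) (fun x hx => le_trans hab hx)
  have hlg : AEStronglyMeasurable (fun v : ℝ => ℓ v (sInf {x : ℝ | v ≤ ProbabilityTheory.cdf m x}))
      (volume.restrict (Ioo (0:ℝ) 1)) :=
    (hmeas.comp_aemeasurable (aemeasurable_id.prodMk hg)).aestronglyMeasurable
  simp only [intervalIntegral.integral_of_le zero_le_one, integral_Ioc_eq_integral_Ioo]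
  have hm2 : Measurable (fun p : ℝ × ℝ => ℓ ((1 - p.2) * Function.leftLim (ProbabilityTheory.cdf m) p.1
        + p.2 * ProbabilityTheory.cdf m p.1) p.1) := hmeas.comp (hU.prodMk measurable_fst)
  have hint : Integrable (fun p : ℝ × ℝ => ℓ ((1 - p.2) * Function.leftLim (ProbabilityTheory.cdf m) p.1
        + p.2 * ProbabilityTheory.cdf m p.1) p.1) (m.prod (volume.restrict (Ioo (0:ℝ) 1))) :=
    Integrable.of_bound hm2.aestronglyMeasurable M (Eventually.of_forall fun p => hbdd _ _)
  rw [← integral_prod _ hint]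
  conv_rhs => rw [← aux_map m]
  rw [integral_map hU.aemeasurable (by rw [aux_map m]; exact hlg)]
  apply integral_congr_ae
  have h1 : ∀ᵐ p ∂(m.prod (volume.restrict (Ioo (0:ℝ) 1))), ∀ y < p.1,
      ProbabilityTheory.cdf m y < ProbabilityTheory.cdf m p.1 :=
    Measure.quasiMeasurePreserving_fst.ae (aux_null m)
  have h2 : ∀ᵐ p ∂(m.prod (volume.restrict (Ioo (0:ℝ) 1))), p.2 ∈ Ioo (0:ℝ) 1 :=
    Measure.quasiMeasurePreserving_snd.ae (ae_restrict_mem measurableSet_Ioo)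
  filter_upwards [h1, h2] with p hp1 hp2
  obtain ⟨x, θ⟩ := p
  obtain ⟨ht0, ht1⟩ := hp2
  simp only at hp1 ht0 ht1 ⊢
  congr 1
  symm
  have hLF := (ProbabilityTheory.monotone_cdf m).leftLim_le (le_refl x)
  have hFL : ∀ y < x, _ := fun y h => (ProbabilityTheory.monotone_cdf m).le_leftLim h
  refine IsLeast.csInf_eq ⟨?_, ?_⟩
  · simp only [mem_setOf_eq]; nlinarith
  · intro y hy
    simp only [mem_setOf_eq] at hy
    by_contra hc
    have a := hp1 y (not_le.1 hc)
    have b := hFL y (not_le.1 hc)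
    nlinarith [mul_pos ht0 (sub_pos.2 a), mul_nonneg (sub_nonneg.2 ht1.le) (sub_nonneg.2 b)]
end

section
/- Let (F_n)_{n≥1} and (G_n)_{n≥1} be sequences of CDFs on ℝ and let F, G be CDFs on ℝ such that: (a) F_n(x) → F(x) for every x ∈ ℝ with ΔF(x) = 0; (b) G_n(x) → G(x) for every x ∈ ℝ with ΔG(x) = 0; (c) ΔF(x)·ΔG(x) = 0 for every x ∈ ℝ (F and G have no common jump point). Then for Lebesgue-almost every v ∈ (0,1), G_n(F_n⁻¹(v)) → G(F⁻¹(v)) and G_n(F_n⁻¹(v)⁻) → G(F⁻¹(v)⁻) as n → ∞. -/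
open MeasureTheory Filter Set

noncomputable section

/-- A cumulative distribution function on ℝ: nondecreasing, right-continuous,
tending to `0` at `-∞` and to `1` at `+∞`. -/
def IsCDF (F : ℝ → ℝ) : Prop :=
  Monotone F ∧ (∀ x : ℝ, ContinuousWithinAt F (Ici x) x) ∧
    Tendsto F atBot (nhds 0) ∧ Tendsto F atTop (nhds 1)

/-- The pseudo-inverse `F⁻¹(v) = inf {x | v ≤ F x}` of a CDF. -/
def cdfInv (F : ℝ → ℝ) (v : ℝ) : ℝ := sInf {x : ℝ | v ≤ F x}

lemma aux_exists_cont {H : ℝ → ℝ} (hH : Monotone H) {a b : ℝ} (hab : a < b) :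
    ∃ c, a < c ∧ c < b ∧ Function.leftLim H c = H c := by
  have hd := (hH.countable_not_continuousAt).dense_compl ℝ
  obtain ⟨c, hc, h1, h2⟩ := hd.exists_between hab
  refine ⟨c, h1, h2, ?_⟩
  have hc' : ContinuousAt H c := by simpa using hc
  exact hH.continuousWithinAt_Iio_iff_leftLim_eq.1 hc'.continuousWithinAt

lemma aux_inv_le {F : ℝ → ℝ} (hF : IsCDF F) {v y : ℝ} (hv : 0 < v) (h : v ≤ F y) :
    cdfInv F v ≤ y := by
  obtain ⟨z, hz⟩ := (hF.2.2.1.eventually (gt_mem_nhds hv)).exists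
  refine csInf_le ⟨z, fun w hw => ?_⟩ h
  by_contra hlt
  have h1 := hF.1 (not_le.1 hlt).le
  have h2 : v ≤ F w := hw
  linarith

lemma aux_le_inv {F : ℝ → ℝ} (hF : IsCDF F) {v y : ℝ} (hv : v < 1) (h : F y < v) :
    y ≤ cdfInv F v := by
  obtain ⟨z, hz⟩ := (hF.2.2.2.eventually (lt_mem_nhds hv)).exists
  refine le_csInf ⟨z, hz.le⟩ fun w hw => ?_
  by_contra hlt
  have h1 := hF.1 (not_le.1 hlt).le
  have h2 : v ≤ F w := hw
  linarith

/-- **Convergence of composed CDFs**: if `Fₙ → F` and `Gₙ → G` at all continuity points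
of the limits, and `F` and `G` have no common jump point, then for Lebesgue-a.e.
`v ∈ (0,1)`, `Gₙ(Fₙ⁻¹(v)) → G(F⁻¹(v))` and `Gₙ(Fₙ⁻¹(v)⁻) → G(F⁻¹(v)⁻)`. -/
theorem composed_cdf_convergence
    (F G : ℝ → ℝ) (Fn Gn : ℕ → ℝ → ℝ)
    (hF : IsCDF F) (hG : IsCDF G)
    (hFn : ∀ n, IsCDF (Fn n)) (hGn : ∀ n, IsCDF (Gn n))
    (ha : ∀ x : ℝ, Function.leftLim F x = F x →
      Tendsto (fun n => Fn n x) atTop (nhds (F x)))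
    (hb : ∀ x : ℝ, Function.leftLim G x = G x →
      Tendsto (fun n => Gn n x) atTop (nhds (G x)))
    (hc : ∀ x : ℝ, (F x - Function.leftLim F x) * (G x - Function.leftLim G x) = 0) :
    ∀ᵐ v ∂(volume.restrict (Ioo (0:ℝ) 1)),
      Tendsto (fun n => Gn n (cdfInv (Fn n) v)) atTop (nhds (G (cdfInv F v))) ∧
      Tendsto (fun n => Function.leftLim (Gn n) (cdfInv (Fn n) v)) atTop
        (nhds (Function.leftLim G (cdfInv F v))) := by
  set J : Set ℝ := {x | ¬ ContinuousAt G x} with hJ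
  have hJc : J.Countable := hG.1.countable_not_continuousAt
  have hbad : (F '' (range ((↑) : ℚ → ℝ) ∪ J)).Countable :=
    ((countable_range _).union hJc).image F
  have hae : ∀ᵐ v ∂(volume.restrict (Ioo (0:ℝ) 1)), v ∉ F '' (range ((↑) : ℚ → ℝ) ∪ J) :=
    ae_restrict_of_ae (hbad.ae_notMem volume)
  filter_upwards [hae, ae_restrict_mem measurableSet_Ioo] with v hv hv01
  obtain ⟨hv0, hv1⟩ := hv01
  set x := cdfInv F v with hx
  have hlt : ∀ y, y < x → F y < v := fun y hy => by
    by_contra hcon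
    exact absurd (aux_inv_le hF hv0 (not_lt.1 hcon)) (not_le.2 hy)
  have hge : ∀ y, x < y → v ≤ F y := fun y hy => by
    by_contra hcon
    exact absurd (aux_le_inv hF hv1 (not_le.1 hcon)) (not_le.2 hy)
  have hgt : ∀ y, x < y → v < F y := fun y hy => by
    obtain ⟨q, h1, h2⟩ := exists_rat_btwn hy
    refine lt_of_lt_of_le (lt_of_le_of_ne (hge q h1) fun h => ?_) (hF.1 h2.le)
    exact hv ⟨q, Or.inl ⟨q, rfl⟩, h.symm⟩
  have hGx : ContinuousAt G x := by
    by_contra hcon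
    have hne : G x - Function.leftLim G x ≠ 0 := fun h => by
      apply hcon
      rw [continuousAt_iff_continuous_left'_right']
      refine ⟨hG.1.continuousWithinAt_Iio_iff_leftLim_eq.2 (by linarith), ?_⟩
      exact (hG.2.1 x).mono Ioi_subset_Ici_self
    have hFl : F x - Function.leftLim F x = 0 := (mul_eq_zero.1 (hc x)).resolve_right hne
    have h1 : v ≤ F x := by
      have ht : Tendsto F (nhdsWithin x (Ioi x)) (nhds (F x)) :=
        (hF.2.1 x).mono Ioi_subset_Ici_self
      refine ge_of_tendsto ht ?_
      filter_upwards [self_mem_nhdsWithin] with y hy using hge y hy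
    have h2 : Function.leftLim F x ≤ v := by
      refine le_of_tendsto (hF.1.tendsto_leftLim x) ?_
      filter_upwards [self_mem_nhdsWithin] with y hy using (hlt y hy).le
    exact hv ⟨x, Or.inr hcon, by linarith⟩
  have hGl : Function.leftLim G x = G x :=
    hG.1.continuousWithinAt_Iio_iff_leftLim_eq.1 hGx.continuousWithinAt
  have key : ∀ ε > 0, ∀ᶠ n in atTop, G x - ε < Function.leftLim (Gn n) (cdfInv (Fn n) v) ∧
      Gn n (cdfInv (Fn n) v) < G x + ε := by
    intro ε hε
    obtain ⟨δ, hδ, hd⟩ := Metric.continuousAt_iff.1 hGx ε hε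
    obtain ⟨a, ha1, ha2, ha3⟩ := aux_exists_cont hG.1 (show x - δ < x by linarith)
    obtain ⟨b, hb1, hb2, hb3⟩ := aux_exists_cont hG.1 (show x < x + δ by linarith)
    obtain ⟨a', ha1', ha2', ha3'⟩ := aux_exists_cont hF.1 ha2
    obtain ⟨b', hb1', hb2', hb3'⟩ := aux_exists_cont hF.1 hb1
    have hGa := hd (x := a) (by rw [Real.dist_eq, abs_lt]; constructor <;> linarith)
    have hGb := hd (x := b) (by rw [Real.dist_eq, abs_lt]; constructor <;> linarith)
    rw [Real.dist_eq, abs_lt] at hGa hGb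
    filter_upwards [(ha a' ha3').eventually (gt_mem_nhds (hlt a' ha2')),
      (ha b' hb3').eventually (lt_mem_nhds (hgt b' hb1')),
      (hb a ha3).eventually (lt_mem_nhds (show G x - ε < G a by linarith)),
      (hb b hb3).eventually (gt_mem_nhds (show G b < G x + ε by linarith))]
      with n e1 e2 e3 e4
    have i1 := aux_le_inv (hFn n) hv1 e1
    have i2 := aux_inv_le (hFn n) hv0 e2.le
    exact ⟨e3.trans_le ((hGn n).1.le_leftLim (by linarith)),
      ((hGn n).1 (by linarith)).trans_lt e4⟩
  rw [hGl]
  constructor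
  · rw [Metric.tendsto_nhds]
    intro ε hε
    filter_upwards [key ε hε] with n hn
    have := (hGn n).1.leftLim_le (le_refl (cdfInv (Fn n) v))
    rw [Real.dist_eq, abs_lt]
    constructor <;> linarith [hn.1, hn.2]
  · rw [Metric.tendsto_nhds]
    intro ε hε
    filter_upwards [key ε hε] with n hn
    have := (hGn n).1.leftLim_le (le_refl (cdfInv (Fn n) v))
    rw [Real.dist_eq, abs_lt]
    constructor <;> linarith [hn.1, hn.2]
end
end

section
/- Let u : (0,+∞) × ℝ → [0,1] be measurable, with u(t,·) right-continuous for every t > 0, and assume ∂_t u ≤ 0 in the distributional sense on (0,+∞)×ℝ, i.e. ∫₀^{+∞}∫_ℝ u(t,x) ∂_tΦ(t,x) dx dt ≥ 0 for every nonnegative smooth function Φ compactly supported in (0,+∞)×ℝ. Then there exists a Lebesgue-null set 𝒯 ⊂ (0,+∞) such that for all t₁, t₂ ∈ (0,+∞)∖𝒯 with t₁ ≤ t₂ and every x ∈ ℝ, u(t₂,x) ≤ u(t₁,x). -/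
open MeasureTheory Filter Set Topology

lemma aux_primitive (ρ : ℝ → ℝ) (hρ : ContDiff ℝ (⊤ : ℕ∞) ρ) :
    ∃ G : ℝ → ℝ, ContDiff ℝ (⊤ : ℕ∞) G ∧ (∀ t, HasDerivAt G (ρ t) t) ∧
      ∀ a b, G b - G a = ∫ s in a..b, ρ s := by
  have hc := hρ.continuous
  have hd : ∀ t, HasDerivAt (fun t => ∫ s in (0:ℝ)..t, ρ s) (ρ t) t := fun t =>
    hc.integral_hasStrictDerivAt 0 t |>.hasDerivAt
  refine ⟨fun t => ∫ s in (0:ℝ)..t, ρ s, ?_, hd, ?_⟩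
  · rw [contDiff_infty_iff_deriv]
    refine ⟨fun t => (hd t).differentiableAt, ?_⟩
    have : deriv (fun t => ∫ s in (0:ℝ)..t, ρ s) = ρ := funext fun t => (hd t).deriv
    rw [this]; exact hρ
  · intro a b
    exact intervalIntegral.integral_interval_sub_left (hc.intervalIntegrable _ _)
      (hc.intervalIntegrable _ _)

/-- one-dimensional version -/
lemma aux_one_dim (f : ℝ → ℝ) (hf : Measurable f) (C : ℝ) (hC : ∀ t, |f t| ≤ C)
    (h : ∀ φ : ℝ → ℝ, ContDiff ℝ (⊤ : ℕ∞) φ → (∀ t, 0 ≤ φ t) → HasCompactSupport φ →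
      tsupport φ ⊆ Ioi (0:ℝ) → 0 ≤ ∫ t, f t * deriv φ t) :
    ∃ T : Set ℝ, volume T = 0 ∧ ∀ t₁ t₂, 0 < t₁ → t₁ ∉ T → t₂ ∉ T → t₁ ≤ t₂ → f t₂ ≤ f t₁ := by
  have hpos : ∀ n : ℕ, (0:ℝ) < 1 / (n + 1) := fun n => by positivity
  let B : ℕ → ContDiffBump (0:ℝ) := fun n =>
    ⟨1 / (n + 1), 2 * (1 / (n + 1)), hpos n, by linarith [hpos n]⟩
  have hlim : Tendsto (fun n : ℕ => (1:ℝ) / (n + 1)) atTop (𝓝 0) :=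
    tendsto_one_div_add_atTop_nhds_zero_nat
  have hli : LocallyIntegrable f volume := by
    have : LocallyIntegrable (fun _ : ℝ => C) volume := locallyIntegrable_const C
    refine this.mono hf.aestronglyMeasurable (Eventually.of_forall fun t => ?_)
    rw [Real.norm_eq_abs, Real.norm_eq_abs]
    exact (hC t).trans (le_abs_self _)
  have key := ContDiffBump.ae_convolution_tendsto_right_of_locallyIntegrable
    (μ := (volume : Measure ℝ)) (φ := B) (l := atTop) (K := 2) (g := f)
    (by simpa [B] using hlim.const_mul 2)
    (Eventually.of_forall fun n => le_rfl) hli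
  refine ⟨_, key, ?_⟩
  intro t₁ t₂ h0 h1 h2 h12
  simp only [mem_compl_iff, mem_ofPred_eq, not_not] at h1 h2
  refine le_of_tendsto_of_tendsto h2 h1 ?_
  have hev : ∀ᶠ n : ℕ in atTop, (1:ℝ) / (n + 1) < t₁ / 2 :=
    hlim.eventually_lt_const (by linarith)
  filter_upwards [hev] with n hn
  set ρ := (B n).normed (volume : Measure ℝ) with hρ
  have hρs : ContDiff ℝ (⊤ : ℕ∞) ρ := (B n).contDiff_normed
  have hρn : ∀ s, 0 ≤ ρ s := fun s => (B n).nonneg_normed s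
  have hρc : HasCompactSupport ρ := (B n).hasCompactSupport_normed
  have hρneg : ∀ s, ρ (-s) = ρ s := fun s => (B n).normed_neg s
  set r : ℝ := 2 * (1 / (n + 1)) with hr
  have hρ0 : ∀ s, r ≤ |s| → ρ s = 0 := by
    intro s hs
    have : s ∉ Function.support ρ := by
      rw [hρ, (B n).support_normed_eq]
      simp only [Metric.mem_ball, dist_zero_right, Real.norm_eq_abs, not_lt]
      exact hs
    simpa using this
  obtain ⟨G, hG, hGd, hGi⟩ := aux_primitive ρ hρs
  let φ : ℝ → ℝ := fun t => G (t - t₁) - G (t - t₂)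
  have hφd : ∀ t, HasDerivAt φ (ρ (t - t₁) - ρ (t - t₂)) t := fun t =>
    ((hGd (t - t₁)).comp_sub_const t t₁).sub ((hGd (t - t₂)).comp_sub_const t t₂)
  have hφi : ∀ t, φ t = ∫ s in (t - t₂)..(t - t₁), ρ s := fun t => hGi _ _
  have hφ0 : ∀ t, t ∉ Icc (t₁ - r) (t₂ + r) → φ t = 0 := by
    intro t ht
    rw [hφi]
    apply intervalIntegral.integral_zero_ae
    refine Eventually.of_forall fun s hs => hρ0 s ?_
    rw [uIoc_of_le (by linarith)] at hs
    rw [mem_Icc, not_and_or, not_le, not_le] at ht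
    rcases ht with ht | ht
    · exact le_trans (by linarith [hs.2]) (neg_le_abs s)
    · exact le_trans (by linarith [hs.1]) (le_abs_self s)
  have hts : tsupport φ ⊆ Icc (t₁ - r) (t₂ + r) := by
    apply closure_minimal _ isClosed_Icc
    intro t ht
    by_contra hc
    exact ht (hφ0 t hc)
  have hfin := h φ
    ((hG.comp (contDiff_id.sub contDiff_const)).sub (hG.comp (contDiff_id.sub contDiff_const)))
    (fun t => by
      rw [hφi]
      exact intervalIntegral.integral_nonneg (by linarith) fun s _ => hρn s)
    (HasCompactSupport.of_support_subset_isCompact isCompact_Icc ((subset_tsupport _).trans hts))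
    (hts.trans fun t ht => by
      have := ht.1
      simp only [mem_Ioi]
      linarith)
  have hint : ∀ a, Integrable (fun t => f t * ρ (t - a)) volume := by
    intro a
    have : Integrable (fun t => ρ (t - a)) volume :=
      (hρs.continuous.integrable_of_hasCompactSupport hρc).comp_sub_right a
    exact this.bdd_mul hf.aestronglyMeasurable (c := C) (Eventually.of_forall hC)
  have hconv : ∀ a, (convolution ρ f (ContinuousLinearMap.lsmul ℝ ℝ) volume) a
      = ∫ t, f t * ρ (t - a) := by
    intro a
    rw [convolution_eq_swap]
    refine integral_congr_ae (Eventually.of_forall fun t => ?_)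
    simp only [ContinuousLinearMap.lsmul_apply, smul_eq_mul]
    rw [← hρneg (a - t), neg_sub, mul_comm]
  have heq : ∫ t, f t * deriv φ t = (∫ t, f t * ρ (t - t₁)) - ∫ t, f t * ρ (t - t₂) := by
    rw [← integral_sub (hint _) (hint _)]
    refine integral_congr_ae (Eventually.of_forall fun t => ?_)
    simp only [(hφd t).deriv]
    ring
  rw [hconv, hconv]
  linarith

lemma aux_bump (u : ℝ → ℝ → ℝ)
    (hmeas : Measurable fun p : Ioi (0:ℝ) × ℝ => u (p.1 : ℝ) p.2)
    (hrange : ∀ t x : ℝ, 0 < t → u t x ∈ Icc (0:ℝ) 1)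
    (hdist : ∀ Φ : ℝ → ℝ → ℝ,
      ContDiff ℝ (⊤ : ℕ∞) (fun p : ℝ × ℝ => Φ p.1 p.2) →
      (∀ t x : ℝ, 0 ≤ Φ t x) →
      HasCompactSupport (fun p : ℝ × ℝ => Φ p.1 p.2) →
      tsupport (fun p : ℝ × ℝ => Φ p.1 p.2) ⊆ Ioi (0:ℝ) ×ˢ (univ : Set ℝ) →
      0 ≤ ∫ t in Ioi (0:ℝ), ∫ x : ℝ, u t x * deriv (fun s => Φ s x) t)
    (ψ : ℝ → ℝ) (hψ : ContDiff ℝ (⊤ : ℕ∞) ψ) (hψ0 : ∀ x, 0 ≤ ψ x) (hψc : HasCompactSupport ψ) :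
    (∀ t, 0 < t → Integrable (fun x => u t x * ψ x) volume) ∧
    ∃ T : Set ℝ, volume T = 0 ∧ ∀ t₁ t₂, 0 < t₁ → t₁ ∉ T → t₂ ∉ T → t₁ ≤ t₂ →
      ∫ x, u t₂ x * ψ x ≤ ∫ x, u t₁ x * ψ x := by
  classical
  have hψi : Integrable ψ volume := hψ.continuous.integrable_of_hasCompactSupport hψc
  let U : ℝ × ℝ → ℝ := fun p => if 0 < p.1 then u p.1 p.2 else 0
  have hU : Measurable U := by
    have hs : MeasurableSet {p : ℝ × ℝ | 0 < p.1} := measurableSet_lt measurable_const measurable_fst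
    refine measurable_of_restrict_of_restrict_compl hs ?_ ?_
    · have h1 : Measurable fun p : {p : ℝ × ℝ | 0 < p.1} =>
          ((⟨p.1.1, p.2⟩ : Ioi (0:ℝ)), p.1.2) :=
        (Measurable.subtype_mk (measurable_fst.comp measurable_subtype_coe)).prodMk
          (measurable_snd.comp measurable_subtype_coe)
      have h2 := hmeas.comp h1
      convert h2 using 1
      ext ⟨p, hp⟩
      have hp' : 0 < p.1 := hp
      simp [U, hp']
    · convert measurable_const (a := (0:ℝ)) using 1
      ext ⟨p, hp⟩
      have hp' : ¬ 0 < p.1 := hp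
      simp [U, hp']
  have hU1 : ∀ p, ‖U p‖ ≤ 1 := by
    intro p
    by_cases hp : 0 < p.1
    · have := hrange p.1 p.2 hp
      simp only [U, hp, if_true, Real.norm_eq_abs, abs_le]
      constructor <;> linarith [this.1, this.2]
    · simp [U, hp]
  have hUt : ∀ t, 0 < t → ∀ x, U (t, x) = u t x := fun t ht x => by simp [U, ht]
  have hUn : ∀ t, ¬ 0 < t → ∀ x, U (t, x) = 0 := fun t ht x => by simp [U, ht]
  have hUi : ∀ t, Integrable (fun x => U (t, x) * ψ x) volume := fun t =>
    hψi.bdd_mul (hU.comp measurable_prodMk_left).aestronglyMeasurable (c := 1)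
      (Eventually.of_forall fun x => hU1 _)
  let f : ℝ → ℝ := fun t => ∫ x, U (t, x) * ψ x
  have hft : ∀ t, 0 < t → f t = ∫ x, u t x * ψ x := fun t ht => by simp only [f, hUt t ht]
  have hfn : ∀ t, ¬ 0 < t → f t = 0 := fun t ht => by simp [f, hUn t ht]
  have hf : Measurable f := by
    have : Measurable fun p : ℝ × ℝ => U p * ψ p.2 :=
      hU.mul (hψ.continuous.measurable.comp measurable_snd)
    exact (this.stronglyMeasurable.integral_prod_right (ν := volume)).measurable
  have hfC : ∀ t, |f t| ≤ ∫ x, ψ x := by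
    intro t
    rw [← Real.norm_eq_abs]
    refine norm_integral_le_of_norm_le hψi (Eventually.of_forall fun x => ?_)
    rw [norm_mul, Real.norm_of_nonneg (hψ0 x)]
    exact mul_le_of_le_one_left (hψ0 x) (hU1 _)
  refine ⟨fun t ht => by simpa only [hUt t ht] using hUi t, ?_⟩
  obtain ⟨T, hT, hT'⟩ := aux_one_dim f hf _ hfC (by
    intro φ hφ hφ0 hφc hφs
    have hsub : tsupport (fun p : ℝ × ℝ => φ p.1 * ψ p.2) ⊆ tsupport φ ×ˢ tsupport ψ := by
      apply closure_minimal _ ((isClosed_tsupport _).prod (isClosed_tsupport _))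
      intro p hp
      have hp' : φ p.1 * ψ p.2 ≠ 0 := hp
      exact ⟨subset_tsupport _ (left_ne_zero_of_mul hp'),
        subset_tsupport _ (right_ne_zero_of_mul hp')⟩
    have := hdist (fun t x => φ t * ψ x)
      ((hφ.comp contDiff_fst).mul (hψ.comp contDiff_snd))
      (fun t x => mul_nonneg (hφ0 t) (hψ0 x))
      (HasCompactSupport.of_support_subset_isCompact (hφc.isCompact.prod hψc.isCompact)
        ((subset_tsupport _).trans hsub))
      (hsub.trans (prod_mono hφs (subset_univ _)))
    refine this.trans_eq ?_
    rw [← setIntegral_eq_integral_of_forall_compl_eq_zero (s := Ioi (0:ℝ))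
      (f := fun t => f t * deriv φ t) (fun t ht => by rw [hfn t ht, zero_mul])]
    refine setIntegral_congr_fun measurableSet_Ioi fun t ht => ?_
    rw [hft t ht, ← integral_mul_const]
    refine integral_congr_ae (Eventually.of_forall fun x => ?_)
    have hd : deriv (fun s => φ s * ψ x) t = deriv φ t * ψ x :=
      deriv_mul_const (hφ.differentiable (by simp) t) _
    simp only [hd]
    ring)
  refine ⟨T, hT, fun t₁ t₂ h0 h1 h2 h12 => ?_⟩
  rw [← hft t₁ h0, ← hft t₂ (h0.trans_le h12)]
  exact hT' t₁ t₂ h0 h1 h2 h12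

/-- If `u : (0,∞) × ℝ → [0,1]` is measurable, right-continuous in space, and satisfies
`∂_t u ≤ 0` in the distributional sense on `(0,∞) × ℝ`, then there is a Lebesgue-null
set `T ⊆ (0,∞)` of times such that `u(t₂,·) ≤ u(t₁,·)` pointwise whenever
`t₁ ≤ t₂` lie in `(0,∞) ∖ T`. -/
theorem distributional_time_monotonicity (u : ℝ → ℝ → ℝ)
    (hmeas : Measurable fun p : Ioi (0:ℝ) × ℝ => u (p.1 : ℝ) p.2)
    (hrange : ∀ t x : ℝ, 0 < t → u t x ∈ Icc (0:ℝ) 1)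
    (hrc : ∀ t : ℝ, 0 < t → ∀ x : ℝ, ContinuousWithinAt (u t) (Ici x) x)
    (hdist : ∀ Φ : ℝ → ℝ → ℝ,
      ContDiff ℝ (⊤ : ℕ∞) (fun p : ℝ × ℝ => Φ p.1 p.2) →
      (∀ t x : ℝ, 0 ≤ Φ t x) →
      HasCompactSupport (fun p : ℝ × ℝ => Φ p.1 p.2) →
      tsupport (fun p : ℝ × ℝ => Φ p.1 p.2) ⊆ Ioi (0:ℝ) ×ˢ (univ : Set ℝ) →
      0 ≤ ∫ t in Ioi (0:ℝ), ∫ x : ℝ, u t x * deriv (fun s => Φ s x) t) :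
    ∃ T : Set ℝ, T ⊆ Ioi (0:ℝ) ∧ volume T = 0 ∧
      ∀ t₁ t₂ : ℝ, t₁ ∈ Ioi (0:ℝ) \ T → t₂ ∈ Ioi (0:ℝ) \ T → t₁ ≤ t₂ →
        ∀ x : ℝ, u t₂ x ≤ u t₁ x := by
  have hpos : ∀ n : ℕ, (0:ℝ) < 1 / (n + 1) := fun n => by positivity
  let B : ∀ (q : ℚ) (_ : ℕ), ContDiffBump (q:ℝ) := fun q n =>
    ⟨1 / (n + 1) / 2, 1 / (n + 1), by linarith [hpos n], by linarith [hpos n]⟩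
  have hB : ∀ q n, _ := fun q n => aux_bump u hmeas hrange hdist (B q n) (B q n).contDiff
    (fun x => (B q n).nonneg) (B q n).hasCompactSupport
  choose hi T hT hT' using hB
  refine ⟨(⋃ q, ⋃ n, T q n) ∩ Ioi 0, inter_subset_right, ?_, ?_⟩
  · refine measure_mono_null inter_subset_left ?_
    simp only [measure_iUnion_null_iff]
    exact hT
  intro t₁ t₂ h1 h2 h12 x
  have p1 : 0 < t₁ := h1.1
  have p2 : 0 < t₂ := h2.1
  have n1 : ∀ q n, t₁ ∉ T q n := fun q n hq => h1.2 ⟨mem_iUnion₂.2 ⟨q, n, hq⟩, h1.1⟩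
  have n2 : ∀ q n, t₂ ∉ T q n := fun q n hq => h2.2 ⟨mem_iUnion₂.2 ⟨q, n, hq⟩, h2.1⟩
  by_contra! hlt
  have hev : ∀ᶠ y in 𝓝[≥] x, u t₁ y < u t₂ y :=
    (hrc t₁ p1 x).tendsto.eventually_lt (hrc t₂ p2 x).tendsto hlt
  obtain ⟨c, hc, hsub⟩ := (mem_nhdsGE_iff_exists_Ico_subset).1 hev
  have hc' : x < c := hc
  obtain ⟨n, hn⟩ := exists_nat_one_div_lt (show 0 < (c - x) / 2 by linarith)
  obtain ⟨q, hq1, hq2⟩ := exists_rat_btwn (show x + 1 / ((n:ℝ) + 1) < c - 1 / ((n:ℝ) + 1) by linarith)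
  have hle := hT' q n t₁ t₂ p1 (n1 q n) (n2 q n) h12
  have hball : ∀ y ∈ Metric.ball (q:ℝ) (1 / ((n:ℝ) + 1)), u t₁ y < u t₂ y := by
    intro y hy
    rw [Real.ball_eq_Ioo] at hy
    exact hsub ⟨by linarith [hy.1], by linarith [hy.2]⟩
  have hsupp : Function.support (B q n) = Metric.ball (q:ℝ) (1 / ((n:ℝ) + 1)) := (B q n).support_eq
  have hd0 : ∀ y, 0 ≤ u t₂ y * B q n y - u t₁ y * B q n y := by
    intro y
    rw [← sub_mul]
    by_cases hy : y ∈ Metric.ball (q:ℝ) (1 / ((n:ℝ) + 1))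
    · exact mul_nonneg (by linarith [hball y hy]) (B q n).nonneg
    · rw [← hsupp, Function.notMem_support] at hy
      rw [hy, mul_zero]
  have hpos' : 0 < ∫ y, (u t₂ y * B q n y - u t₁ y * B q n y) := by
    rw [integral_pos_iff_support_of_nonneg hd0 ((hi q n t₂ p2).sub (hi q n t₁ p1))]
    refine (Metric.measure_ball_pos volume (q:ℝ) (hpos n)).trans_le (measure_mono ?_)
    intro y hy
    have h3 := hball y hy
    rw [← hsupp] at hy
    rw [Function.mem_support, ← sub_mul]
    exact mul_ne_zero (sub_pos.2 h3).ne' hy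
  rw [integral_sub (hi q n t₂ p2) (hi q n t₁ p1)] at hpos'
  linarith
end

section
/- Under Assumption (C), let u = (u¹,…,u^d) be a probabilistic solution with initial data (u₀¹,…,u₀^d) satisfying u^γ(0,·) = u₀^γ for every γ, and such that t ↦ u(t,·) is continuous in L¹_loc(ℝ)^d. Fix γ ∈ {1,…,d} and suppose u is a renormalised solution in the γ-th coordinate. Then for Lebesgue-almost every v ∈ (0,1), the quantile trajectory t ↦ X_v^γ(t) is Lipschitz continuous and satisfies X_v^γ(t₂) − X_v^γ(t₁) = ∫_{t₁}^{t₂} λ^γ{u}(s, X_v^γ(s)) ds for all 0 ≤ t₁ ≤ t₂. -/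
open MeasureTheory Filter Set

noncomputable section

/-- The velocity function `λ^γ{u}(t,x)` obtained by averaging the `γ`-th coordinate
between the left limit `u^γ(t,x⁻)` and the value `u^γ(t,x)`. -/
def lamBrace {d : ℕ} (lam : Fin d → (Fin d → ℝ) → ℝ)
    (u : Fin d → ℝ → ℝ → ℝ) (γ : Fin d) (t x : ℝ) : ℝ :=
  ∫ θ in (0:ℝ)..1,
    lam γ (Function.update (fun γ' => u γ' t x) γ
      ((1 - θ) * Function.leftLim (u γ t) x + θ * u γ t x))

/-- A test function `φ` of class `C^{1,0}_c`: continuous, compactly supported,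
with continuous time derivative `φt`. -/
def IsTestFun (φ φt : ℝ → ℝ → ℝ) : Prop :=
  Continuous (fun p : ℝ × ℝ => φ p.1 p.2) ∧
    HasCompactSupport (fun p : ℝ × ℝ => φ p.1 p.2) ∧
    Continuous (fun p : ℝ × ℝ => φt p.1 p.2) ∧
    ∀ t x : ℝ, HasDerivAt (fun s => φ s x) (φt t x) t

/-- A probabilistic solution to the diagonal hyperbolic system
`∂_t u^γ + λ^γ(u) ∂_x u^γ = 0` with initial data `u0`. -/
def IsProbSol {d : ℕ} (lam : Fin d → (Fin d → ℝ) → ℝ)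
    (u : Fin d → ℝ → ℝ → ℝ) (u0 : Fin d → ℝ → ℝ) : Prop :=
  (∀ γ : Fin d, Measurable fun p : Ici (0:ℝ) × ℝ => u γ (p.1 : ℝ) p.2) ∧
  (∀ (γ : Fin d) (t : ℝ), 0 ≤ t → IsCDF (u γ t)) ∧
  (∀ γ : Fin d, IsCDF (u0 γ)) ∧
  ∃ μ : Fin d → ℝ → Measure ℝ,
    (∀ (γ : Fin d) (t : ℝ), IsProbabilityMeasure (μ γ t)) ∧
    (∀ (γ : Fin d) (t : ℝ), 0 ≤ t → ∀ x : ℝ, (μ γ t (Iic x)).toReal = u γ t x) ∧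
    ∀ φ φt : Fin d → ℝ → ℝ → ℝ, (∀ γ, IsTestFun (φ γ) (φt γ)) →
      (∑ γ : Fin d, ((∫ t in Ici (0:ℝ), ∫ x : ℝ, φt γ t x * u γ t x) +
          ∫ x : ℝ, φ γ 0 x * u0 γ x))
        = ∑ γ : Fin d,
            ∫ t in Ici (0:ℝ), ∫ x : ℝ, φ γ t x * lamBrace lam u γ t x ∂(μ γ t)

/-- Continuity of `t ↦ u(t,·)` in `L¹_loc(ℝ)^d` on `[0,∞)`. -/
def ContL1loc {d : ℕ} (u : Fin d → ℝ → ℝ → ℝ) : Prop :=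
  ∀ (γ : Fin d) (a b t₀ : ℝ), 0 ≤ t₀ →
    Tendsto (fun t => ∫ x in Icc a b, |u γ t x - u γ t₀ x|)
      (nhdsWithin t₀ (Ici 0)) (nhds 0)

/-- A renormalised solution in the `γ`-th coordinate: the weak formulation holds with
`u^γ` replaced by `β(u^γ)` for every `C¹` increasing `β : [0,1] → ℝ` with
`β(0) = 0`, `β(1) = 1`. -/
def IsRenormalised {d : ℕ} (lam : Fin d → (Fin d → ℝ) → ℝ)
    (u : Fin d → ℝ → ℝ → ℝ) (u0 : Fin d → ℝ → ℝ) (γ : Fin d) : Prop :=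
  ∀ β : ℝ → ℝ, ContDiffOn ℝ 1 β (Icc 0 1) → StrictMonoOn β (Icc 0 1) →
    β 0 = 0 → β 1 = 1 →
    ∀ φ φt : ℝ → ℝ → ℝ, IsTestFun φ φt →
      ∃ ν : ℝ → Measure ℝ,
        (∀ t : ℝ, IsProbabilityMeasure (ν t)) ∧
        (∀ t : ℝ, 0 ≤ t → ∀ x : ℝ, (ν t (Iic x)).toReal = β (u γ t x)) ∧
        (∫ t in Ici (0:ℝ), ∫ x : ℝ, φt t x * β (u γ t x)) +
            (∫ x : ℝ, φ 0 x * β (u0 γ x))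
          = ∫ t in Ici (0:ℝ), ∫ x : ℝ, φ t x * lamBrace lam u γ t x ∂(ν t)


lemma IsCDF.nonneg {F : ℝ → ℝ} (h : IsCDF F) (x : ℝ) : 0 ≤ F x :=
  h.1.le_of_tendsto h.2.2.1 x
lemma IsCDF.le_one {F : ℝ → ℝ} (h : IsCDF F) (x : ℝ) : F x ≤ 1 :=
  h.1.ge_of_tendsto h.2.2.2 x

lemma cdfInv_le_iff {F : ℝ → ℝ} (h : IsCDF F) {v : ℝ} (hv : v ∈ Ioo (0:ℝ) 1) (x : ℝ) :
    cdfInv F v ≤ x ↔ v ≤ F x := by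
  have hne : {x : ℝ | v ≤ F x}.Nonempty := by
    obtain ⟨y, hy⟩ := (h.2.2.2.eventually (lt_mem_nhds hv.2)).exists
    exact ⟨y, hy.le⟩
  have hbd : BddBelow {x : ℝ | v ≤ F x} := by
    obtain ⟨y, hy⟩ := (h.2.2.1.eventually (gt_mem_nhds hv.1)).exists
    refine ⟨y, fun z hz => ?_⟩
    by_contra hlt
    have := h.1 (not_le.1 hlt).le
    have hz' : v ≤ F z := hz
    linarith
  constructor
  · intro hx
    refine le_trans ?_ (h.1 hx)
    have hc := h.2.1 (cdfInv F v)
    have hc' : Tendsto F (nhdsWithin (cdfInv F v) (Ioi (cdfInv F v))) (nhds (F (cdfInv F v))) :=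
      hc.tendsto.mono_left (nhdsWithin_mono _ Ioi_subset_Ici_self)
    refine ge_of_tendsto hc' ?_
    filter_upwards [self_mem_nhdsWithin] with y hy
    obtain ⟨z, hz, hzy⟩ := (csInf_lt_iff hbd hne).1 (show sInf {x : ℝ | v ≤ F x} < y from hy)
    exact le_trans hz (h.1 hzy.le)
  · intro hx
    exact csInf_le hbd hx

/-- quantile function, set to zero outside `(0,1)` -/
def Xq (F : ℝ → ℝ) (v : ℝ) : ℝ := by
  classical exact if v ∈ Ioo (0:ℝ) 1 then cdfInv F v else 0

lemma Xq_of_mem (F : ℝ → ℝ) {v : ℝ} (hv : v ∈ Ioo (0:ℝ) 1) : Xq F v = cdfInv F v := by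
  unfold Xq; rw [if_pos hv]

lemma Xq_le_iff {F : ℝ → ℝ} (h : IsCDF F) {v : ℝ} (hv : v ∈ Ioo (0:ℝ) 1) (x : ℝ) :
    Xq F v ≤ x ↔ v ≤ F x := by rw [Xq_of_mem F hv, cdfInv_le_iff h hv]

lemma Xq_mono {F : ℝ → ℝ} (h : IsCDF F) {v w : ℝ} (hv : v ∈ Ioo (0:ℝ) 1) (hw : w ∈ Ioo (0:ℝ) 1)
    (hvw : v ≤ w) : Xq F v ≤ Xq F w := by
  rw [Xq_le_iff h hv]
  exact hvw.trans ((Xq_le_iff h hw _).1 le_rfl)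

lemma Xq_measurable {F : ℝ → ℝ → ℝ} (hm : Measurable (fun p : ℝ × ℝ => F p.1 p.2))
    (h : ∀ t, IsCDF (F t)) : Measurable (fun p : ℝ × ℝ => Xq (F p.1) p.2) := by
  refine measurable_of_Iic fun x => ?_
  have : (fun p : ℝ × ℝ => Xq (F p.1) p.2) ⁻¹' Iic x =
      ({p | p.2 ∈ Ioo (0:ℝ) 1} ∩ {p | p.2 ≤ F p.1 x}) ∪ ({p | p.2 ∈ Ioo (0:ℝ) 1}ᶜ ∩ {_p | 0 ≤ x}) := by
    ext p
    by_cases hp : p.2 ∈ Ioo (0:ℝ) 1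
    · simp only [mem_preimage, mem_Iic, Xq_le_iff (h p.1) hp, mem_union, mem_inter_iff, mem_compl_iff,
        mem_ofPred_eq, hp]
      simp
    · have : Xq (F p.1) p.2 = 0 := by unfold Xq; rw [if_neg hp]
      simp only [mem_preimage, mem_Iic, this, mem_union, mem_inter_iff, mem_compl_iff,
        mem_ofPred_eq, hp]
      simp
  rw [this]
  have h1 : MeasurableSet {p : ℝ × ℝ | p.2 ∈ Ioo (0:ℝ) 1} := measurable_snd measurableSet_Ioo
  have h2 : MeasurableSet {p : ℝ × ℝ | p.2 ≤ F p.1 x} :=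
    measurableSet_le measurable_snd (hm.comp (measurable_fst.prodMk measurable_const))
  exact (h1.inter h2).union (h1.compl.inter (MeasurableSet.const _))

lemma Xq_measurable_one {F : ℝ → ℝ} (h : IsCDF F) : Measurable (Xq F) := by
  have := Xq_measurable (F := fun _ => F) (h.1.measurable.comp measurable_snd) (fun _ => h)
  exact this.comp (measurable_const.prodMk measurable_id : Measurable fun v : ℝ => ((0:ℝ), v))

lemma Xq_le_of_ae {F₁ F₂ : ℝ → ℝ} (h₁ : IsCDF F₁) (h₂ : IsCDF F₂) (c : ℝ)
    (hae : ∀ᵐ v : ℝ, v ∈ Ioo (0:ℝ) 1 → Xq F₁ v ≤ Xq F₂ v + c) {v : ℝ} (hv : v ∈ Ioo (0:ℝ) 1) :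
    Xq F₁ v ≤ Xq F₂ v + c := by
  by_contra hlt
  have hlt' : ¬ v ≤ F₁ (Xq F₂ v + c) := fun hh => hlt ((Xq_le_iff h₁ hv _).2 hh)
  have hd := Measure.dense_of_ae hae
  obtain ⟨w, hw, hw1, hw2⟩ := hd.exists_between (not_le.1 hlt')
  have hw0 : w ∈ Ioo (0:ℝ) 1 := ⟨(h₁.nonneg _).trans_lt hw1, hw2.trans hv.2⟩
  have e1 := hw hw0
  have e2 := Xq_mono h₂ hw0 hv hw2.le
  have e3 := (Xq_le_iff h₁ hw0 (Xq F₂ v + c)).1 (by linarith)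
  linarith

lemma integral_p_eq {F : ℝ → ℝ} (h : IsCDF F) (p : ℝ → ℝ) (x : ℝ) :
    ∫ v in (0:ℝ)..F x, p v = ∫ v in Ioo (0:ℝ) 1, p v * (Iic x).indicator (fun _ => (1:ℝ)) (Xq F v) := by
  rw [intervalIntegral.integral_of_le (h.nonneg x)]
  have : ∀ v ∈ Ioo (0:ℝ) 1, p v * (Iic x).indicator (fun _ => (1:ℝ)) (Xq F v)
      = (Iic (F x)).indicator p v := by
    intro v hv
    by_cases hx : v ≤ F x
    · rw [indicator_of_mem (show v ∈ Iic (F x) from hx),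
        indicator_of_mem (show Xq F v ∈ Iic x from (Xq_le_iff h hv x).2 hx), mul_one]
    · rw [indicator_of_notMem (show v ∉ Iic (F x) from hx),
        indicator_of_notMem (show Xq F v ∉ Iic x from fun hh => hx ((Xq_le_iff h hv x).1 hh)), mul_zero]
  rw [setIntegral_congr_fun measurableSet_Ioo this, setIntegral_indicator measurableSet_Iic]
  have e : Ioc (0:ℝ) (F x) = Ioc 0 1 ∩ Iic (F x) := by
    ext v
    have := h.le_one x
    simp only [mem_Ioc, mem_inter_iff, mem_Iic]
    constructor
    · rintro ⟨h1, h2⟩; exact ⟨⟨h1, h2.trans this⟩, h2⟩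
    · rintro ⟨⟨h1, _⟩, h2⟩; exact ⟨h1, h2⟩
  rw [e]
  exact setIntegral_congr_set (Ioo_ae_eq_Ioc.symm.inter (ae_eq_refl _))

lemma nu_eq {F : ℝ → ℝ} (h : IsCDF F) {p : ℝ → ℝ} (hp : Continuous p) (hpos : ∀ x, 0 < p x)
    (ν : Measure ℝ) [IsProbabilityMeasure ν]
    (hν : ∀ x, (ν (Iic x)).toReal = ∫ v in (0:ℝ)..F x, p v) {f : ℝ → ℝ} (hf : Measurable f) :
    ∫ x, f x ∂ν = ∫ v in Ioo (0:ℝ) 1, p v * f (Xq F v) := by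
  have hX := Xq_measurable_one h
  have hpI : IntegrableOn p (Ioo (0:ℝ) 1) :=
    (hp.integrableOn_Icc (a := 0) (b := 1)).mono_set Ioo_subset_Icc_self
  set m : Measure ℝ := ((volume.restrict (Ioo (0:ℝ) 1)).withDensity (fun v => ENNReal.ofReal (p v))) with hm
  have hmf : IsFiniteMeasure m := isFiniteMeasure_withDensity_ofReal hpI.2
  have key : ν = m.map (Xq F) := by
    refine Measure.ext_of_Iic _ _ fun x => ?_
    rw [Measure.map_apply hX measurableSet_Iic, ← ENNReal.toReal_eq_toReal_iff' (by simp) (by simp), hν,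
      integral_p_eq h, hm, withDensity_apply _ (hX measurableSet_Iic), ← integral_eq_lintegral_of_nonneg_ae]
    · rw [← integral_indicator (hX measurableSet_Iic)]
      congr 1; ext v
      by_cases hv : Xq F v ∈ Iic x
      · rw [indicator_of_mem hv, indicator_of_mem (show v ∈ Xq F ⁻¹' Iic x from hv), mul_one]
      · rw [indicator_of_notMem hv, indicator_of_notMem (show v ∉ Xq F ⁻¹' Iic x from hv), mul_zero]
    · exact Eventually.of_forall fun v => (hpos v).le
    · exact hp.aestronglyMeasurable
  rw [key, integral_map hX.aemeasurable hf.aestronglyMeasurable, hm,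
    integral_withDensity_eq_integral_toReal_smul (by fun_prop) (by simp)]
  congr 1; ext v
  rw [ENNReal.toReal_ofReal (hpos v).le, smul_eq_mul]

lemma a_eq {F : ℝ → ℝ} (h : IsCDF F) {p : ℝ → ℝ} (hp : Continuous p)
    {χ : ℝ → ℝ} (hχ : Continuous χ) (hχc : HasCompactSupport χ) :
    ∫ x, χ x * ∫ v in (0:ℝ)..F x, p v = ∫ v in Ioo (0:ℝ) 1, p v * ∫ x in Ici (Xq F v), χ x := by
  have hX := Xq_measurable_one h
  have hpI : IntegrableOn p (Ioo (0:ℝ) 1) :=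
    (hp.integrableOn_Icc (a := 0) (b := 1)).mono_set Ioo_subset_Icc_self
  have hχI : Integrable χ := hχ.integrable_of_hasCompactSupport hχc
  have e1 : ∀ x, χ x * ∫ v in (0:ℝ)..F x, p v =
      ∫ v in Ioo (0:ℝ) 1, χ x * (p v * (Iic x).indicator (fun _ => (1:ℝ)) (Xq F v)) := by
    intro x; rw [integral_p_eq h, integral_const_mul]
  have e2 : ∀ v, p v * ∫ x in Ici (Xq F v), χ x =
      ∫ x, χ x * (p v * (Iic x).indicator (fun _ => (1:ℝ)) (Xq F v)) := by
    intro v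
    rw [← integral_indicator measurableSet_Ici, ← integral_const_mul]
    congr 1; ext x
    by_cases hx : Xq F v ≤ x
    · rw [indicator_of_mem (show x ∈ Ici (Xq F v) from hx), indicator_of_mem (show Xq F v ∈ Iic x from hx)]
      ring
    · rw [indicator_of_notMem (show x ∉ Ici (Xq F v) from hx),
        indicator_of_notMem (show Xq F v ∉ Iic x from hx)]
      ring
  simp_rw [e1, e2]
  refine integral_integral_swap ?_
  have hI := hχI.mul_prod hpI
  have hS : MeasurableSet {z : ℝ × ℝ | Xq F z.2 ≤ z.1} :=
    measurableSet_le (hX.comp measurable_snd) measurable_fst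
  refine (hI.indicator hS).congr (Eventually.of_forall fun z => ?_)
  simp only [indicator, mem_ofPred_eq, mem_Iic, Function.uncurry]
  split_ifs <;> simp

lemma exists_time_fun {g : ℝ → ℝ} (hg : Continuous g) (hgc : HasCompactSupport g)
    (hgs : tsupport g ⊆ Ioi 0) :
    ∃ G G' : ℝ → ℝ, HasCompactSupport G ∧ Continuous G' ∧ (∀ t, HasDerivAt G (G' t) t) ∧
      (∀ t, 0 ≤ t → G' t = - g t) ∧ (∀ t, 0 ≤ t → G t = ∫ s in Ioi t, g s) := by
  obtain ⟨R, hR⟩ := hgc.isCompact.isBounded.subset_closedBall 0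
  have hz : ∀ t, R < |t| → g t = 0 := by
    intro t ht
    by_contra hne
    have := hR (subset_tsupport g (show t ∈ Function.support g from hne))
    rw [mem_closedBall_zero_iff, Real.norm_eq_abs] at this
    linarith
  have hneg : ∀ t, t ≤ 0 → g t = 0 := by
    intro t ht
    by_contra hne
    have := hgs (subset_tsupport g (show t ∈ Function.support g from hne))
    exact absurd this (not_lt.2 ht)
  set k : ℝ → ℝ := fun s => g (-s) - g s with hk
  have hkc : Continuous k := by fun_prop
  have hkz : ∀ t, R < |t| → k t = 0 := by
    intro t ht
    simp only [hk, hz t ht, hz (-t) (by rwa [abs_neg]), sub_zero]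
  set G : ℝ → ℝ := fun t => ∫ s in (-(|R|+1))..t, k s with hG
  have hd : ∀ t, HasDerivAt G (k t) t := fun t =>
    intervalIntegral.integral_hasDerivAt_right (hkc.intervalIntegrable _ _)
      (hkc.stronglyMeasurableAtFilter _ _) hkc.continuousAt
  have habs := le_abs_self R
  have hsupp : HasCompactSupport G := by
    refine HasCompactSupport.intro (isCompact_Icc (a := -(|R|+1)) (b := |R|+1)) ?_
    intro t ht
    have h0 : ∀ a b : ℝ, (∀ x ∈ uIcc a b, R < |x|) → ∫ s in a..b, k s = 0 := by
      intro a b hab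
      rw [intervalIntegral.integral_congr (g := fun _ => (0:ℝ)) (fun x hx => hkz x (hab x hx))]
      simp
    by_cases h1 : t < -(|R|+1)
    · refine h0 _ _ fun x hx => ?_
      rw [uIcc_of_ge h1.le] at hx
      have := neg_le_abs x
      linarith [hx.2]
    · have h2 : |R|+1 < t := by
        by_contra h2
        exact ht ⟨not_lt.1 h1, not_lt.1 h2⟩
      simp only [hG]
      rw [← intervalIntegral.integral_add_adjacent_intervals (b := |R|+1)
        (hkc.intervalIntegrable _ _) (hkc.intervalIntegrable _ _), h0 (|R|+1) t, add_zero]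
      · simp only [hk]
        rw [intervalIntegral.integral_sub ((by fun_prop : Continuous fun s => g (-s)).intervalIntegrable _ _)
          (hg.intervalIntegrable _ _), intervalIntegral.integral_comp_neg]
        simp
      · intro x hx
        rw [uIcc_of_le h2.le] at hx
        have := le_abs_self x
        linarith [hx.1]
  have hk' : ∀ t, 0 ≤ t → k t = - g t := by
    intro t ht
    simp [hk, hneg (-t) (by linarith)]
  refine ⟨G, k, hsupp, hkc, hd, hk', fun t ht => ?_⟩
  have hder : deriv G = k := funext fun t => (hd t).deriv
  have hcd : ContDiff ℝ 1 G := by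
    rw [contDiff_one_iff_deriv]
    exact ⟨fun t => (hd t).differentiableAt, hder ▸ hkc⟩
  have := hsupp.integral_Ioi_deriv_eq hcd t
  rw [hder, setIntegral_congr_fun measurableSet_Ioi
    (g := fun s => - g s) (fun s hs => hk' s (ht.trans (le_of_lt hs))), integral_neg] at this
  linarith

lemma time_lemma {a b : ℝ → ℝ} {C : ℝ} (ha : Continuous a) (hb : Measurable b) (hbC : ∀ t, |b t| ≤ C)
    (h : ∀ G G' : ℝ → ℝ, HasCompactSupport G → Continuous G' → (∀ t, HasDerivAt G (G' t) t) →
      (∫ t in Ici (0:ℝ), G' t * a t) + G 0 * a 0 = ∫ t in Ici (0:ℝ), G t * b t) :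
    ∀ T, 0 ≤ T → a T - a 0 = - ∫ t in (0:ℝ)..T, b t := by
  have hbi : ∀ x y, IntervalIntegrable b volume x y := by
    intro x y
    refine (intervalIntegrable_const (c := C)).mono_fun hb.aestronglyMeasurable ?_
    refine Eventually.of_forall fun t => ?_
    simpa using (hbC t).trans (le_abs_self C)
  have hB : Continuous (fun T => ∫ t in (0:ℝ)..T, b t) :=
    intervalIntegral.continuous_primitive hbi 0
  set c : ℝ → ℝ := fun t => a 0 - a t - ∫ t in (0:ℝ)..t, b t with hc
  have hcc : Continuous c := by fun_prop
  have hae : ∀ᵐ x : ℝ, x ∈ Ioi (0:ℝ) → c x = 0 := by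
    refine isOpen_Ioi.ae_eq_zero_of_integral_contDiff_smul_eq_zero
      (hcc.locallyIntegrable.locallyIntegrableOn _) ?_
    intro g hg hgc hgs
    have hgcont := hg.continuous
    have hgi : Integrable g := hgcont.integrable_of_hasCompactSupport hgc
    obtain ⟨G, G', hGc, hG'c, hd, hG', hG⟩ := exists_time_fun hgcont hgc hgs
    have hw := h G G' hGc hG'c hd
    have hneg : ∀ t, t ≤ 0 → g t = 0 := by
      intro t ht
      by_contra hne
      have := hgs (subset_tsupport g (show t ∈ Function.support g from hne))
      exact absurd this (not_lt.2 ht)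
    have hIoi : ∀ f : ℝ → ℝ, ∫ x, g x * f x = ∫ x in Ioi (0:ℝ), g x * f x := by
      intro f
      rw [setIntegral_eq_integral_of_forall_compl_eq_zero]
      intro x hx
      rw [hneg x (not_lt.1 hx), zero_mul]
    have hFub : ∫ t in Ioi (0:ℝ), G t * b t = ∫ s in Ioi (0:ℝ), g s * ∫ t in (0:ℝ)..s, b t := by
      have e1 : ∀ t ∈ Ioi (0:ℝ), G t * b t = ∫ s in Ioi (0:ℝ), {z : ℝ × ℝ | z.1 < z.2}.indicator
          (fun z => b z.1 * g z.2) (t, s) := by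
        intro t ht
        have : ∀ s, {z : ℝ × ℝ | z.1 < z.2}.indicator (fun z => b z.1 * g z.2) (t, s)
          = (Ioi t).indicator (fun s => b t * g s) s := fun s => by
            simp only [indicator, mem_ofPred_eq, mem_Ioi]
        simp_rw [this]
        rw [setIntegral_indicator measurableSet_Ioi, integral_const_mul, hG t (le_of_lt ht), mul_comm,
          inter_eq_right.2 (Ioi_subset_Ioi (le_of_lt ht))]
      have e2 : ∀ s ∈ Ioi (0:ℝ), g s * ∫ t in (0:ℝ)..s, b t =
          ∫ t in Ioi (0:ℝ), {z : ℝ × ℝ | z.1 < z.2}.indicator (fun z => b z.1 * g z.2) (t, s) := by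
        intro s hs
        have : ∀ t, {z : ℝ × ℝ | z.1 < z.2}.indicator (fun z => b z.1 * g z.2) (t, s)
          = (Iio s).indicator (fun t => b t * g s) t := fun t => by
            simp only [indicator, mem_ofPred_eq, mem_Iio]
        simp_rw [this]
        rw [setIntegral_indicator measurableSet_Iio, integral_mul_const, mul_comm,
          intervalIntegral.integral_of_le (le_of_lt hs), Ioi_inter_Iio, integral_Ioc_eq_integral_Ioo]
      rw [setIntegral_congr_fun measurableSet_Ioi e1, setIntegral_congr_fun measurableSet_Ioi e2]
      refine integral_integral_swap (f := fun t s => {z : ℝ × ℝ | z.1 < z.2}.indicator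
          (fun z => b z.1 * g z.2) (t, s)) ?_
      obtain ⟨R, hR⟩ := hgc.isCompact.isBounded.subset_closedBall 0
      have hz : ∀ t, R < t → g t = 0 := by
        intro t ht
        by_contra hne
        have := hR (subset_tsupport g (show t ∈ Function.support g from hne))
        rw [mem_closedBall_zero_iff, Real.norm_eq_abs] at this
        linarith [le_abs_self t]
      have hbI : Integrable ((Iic R).indicator b) (volume.restrict (Ioi 0)) := by
        rw [integrable_indicator_iff measurableSet_Iic, IntegrableOn, Measure.restrict_restrict measurableSet_Iic,
          inter_comm, Ioi_inter_Iic]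
        by_cases hR0 : 0 ≤ R
        · exact (intervalIntegrable_iff_integrableOn_Ioc_of_le hR0).1 (hbi 0 R)
        · rw [Ioc_eq_empty (by linarith)]; simp
      have hI := hbI.mul_prod (hgi.integrableOn (s := Ioi 0))
      refine (hI.indicator (measurableSet_lt measurable_fst measurable_snd)).congr
        (Eventually.of_forall fun z => ?_)
      simp only [indicator, mem_ofPred_eq, Function.uncurry, mem_Iic]
      split_ifs with h1 h2
      · rfl
      · rw [hz z.2 (by linarith)]; simp
      · rfl
    rw [integral_Ici_eq_integral_Ioi, integral_Ici_eq_integral_Ioi, hFub,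
      setIntegral_congr_fun measurableSet_Ioi (g := fun t => - (g t * a t))
        (fun t ht => by simp only [hG' t (le_of_lt ht)]; ring), integral_neg, hG 0 le_rfl, ← hIoi a,
        ← hIoi] at hw
    have hg0 : ∫ s in Ioi (0:ℝ), g s = ∫ s, g s := by
      simpa using (hIoi (fun _ => 1)).symm
    rw [hg0] at hw
    have i1 : Integrable (fun x => g x * a 0) := hgi.mul_const _
    have i2 : Integrable (fun x => g x * a x) :=
      (hgcont.mul ha).integrable_of_hasCompactSupport hgc.mul_right
    have i3 : Integrable (fun x => g x * ∫ t in (0:ℝ)..x, b t) :=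
      (hgcont.mul hB).integrable_of_hasCompactSupport hgc.mul_right
    simp only [hc, smul_eq_mul, mul_sub]
    have i12 : Integrable (fun x => g x * a 0 - g x * a x) := i1.sub i2
    rw [integral_sub i12 i3, integral_sub i1 i2, integral_mul_const]
    linarith
  have hEq : EqOn c (fun _ => 0) (Ici 0) := by
    refine Measure.eqOn_of_ae_eq (μ := volume) ?_ hcc.continuousOn continuousOn_const
      (by rw [interior_Ici, closure_Ioi])
    rw [← restrict_Ioi_eq_restrict_Ici]
    exact (ae_restrict_iff' measurableSet_Ioi).2 hae
  intro T hT
  have := hEq (show T ∈ Ici (0:ℝ) from hT)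
  simp only [hc] at this
  linarith

lemma W_lemma {W : ℝ → ℝ} {C : ℝ} (hW : Measurable W) (hWC : ∀ t, |W t| ≤ C)
    (h : ∀ p : ℝ → ℝ, Continuous p → (∀ x, 0 < p x) → ∫ v in (0:ℝ)..1, p v = 1 →
      ∫ v in Ioo (0:ℝ) 1, p v * W v = 0) :
    ∀ᵐ v : ℝ, v ∈ Ioo (0:ℝ) 1 → W v = 0 := by
  have hWI : LocallyIntegrable W := by
    refine (locallyIntegrable_const C).mono hW.aestronglyMeasurable ?_
    refine Eventually.of_forall fun t => ?_
    simpa using (hWC t).trans (le_abs_self C)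
  have hW1 : IntegrableOn W (Ioo 0 1) :=
    (hWI.integrableOn_isCompact isCompact_Icc).mono_set (Ioo_subset_Icc_self (a := (0:ℝ)) (b := 1))
  refine isOpen_Ioo.ae_eq_zero_of_integral_contDiff_smul_eq_zero
      (hWI.locallyIntegrableOn _) ?_
  intro g hg hgc hgs
  have hgcont := hg.continuous
  obtain ⟨K, hK⟩ := hgc.exists_bound_of_continuous hgcont
  have hK0 : 0 ≤ K := (norm_nonneg _).trans (hK 0)
  set D := K + 1 with hD
  have hpos : ∀ x, 0 < D + g x := by
    intro x
    have := hK x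
    rw [Real.norm_eq_abs] at this
    linarith [neg_abs_le (g x)]
  set I := ∫ v in (0:ℝ)..1, (D + g v) with hI
  have hIpos : 0 < I :=
    intervalIntegral.intervalIntegral_pos_of_pos ((by fun_prop : Continuous fun v => D + g v).intervalIntegrable _ _)
      hpos one_pos
  have h1 := h (fun _ => 1) continuous_const (by simp) (by simp)
  have h2 := h (fun v => (D + g v) / I) (by fun_prop) (fun x => div_pos (hpos x) hIpos)
    (by rw [intervalIntegral.integral_div, ← hI, div_self hIpos.ne'])
  simp only [one_mul] at h1
  have hgW : IntegrableOn (fun v => g v * W v) (Ioo 0 1) := by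
    exact Integrable.bdd_mul (c := K) hW1 hgcont.aestronglyMeasurable (Eventually.of_forall hK)
  have e : ∀ v, (D + g v) / I * W v = I⁻¹ * (D * W v + g v * W v) := by intro v; field_simp
  simp_rw [e] at h2
  rw [integral_const_mul, integral_add (hW1.const_mul D) hgW, integral_const_mul, h1, mul_zero, zero_add] at h2
  have h3 := (mul_eq_zero.1 h2).resolve_left (inv_ne_zero hIpos.ne')
  rw [setIntegral_eq_integral_of_forall_compl_eq_zero] at h3
  · simpa using h3
  · intro x hx
    have : g x = 0 := by
      by_contra hne
      exact hx (hgs (subset_tsupport g (show x ∈ Function.support g from hne)))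
    rw [this, zero_mul]

lemma a_cont {F : ℝ → ℝ → ℝ} (hcdf : ∀ t, IsCDF (F t))
    (hL1 : ∀ A B t₀ : ℝ, Tendsto (fun t => ∫ x in Icc A B, |F t x - F t₀ x|) (nhds t₀) (nhds 0))
    {p : ℝ → ℝ} (hp : Continuous p) {χ : ℝ → ℝ} (hχ : Continuous χ) (hχc : HasCompactSupport χ) :
    Continuous (fun t => ∫ x, χ x * ∫ v in (0:ℝ)..F t x, p v) := by
  obtain ⟨Kp, hKp⟩ := isCompact_Icc.exists_bound_of_continuousOn (s := Icc (0:ℝ) 1) hp.continuousOn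
  obtain ⟨K, hK⟩ := hχc.exists_bound_of_continuous hχ
  obtain ⟨R, hR⟩ := hχc.isCompact.isBounded.subset_closedBall 0
  have hχI : Integrable χ := hχ.integrable_of_hasCompactSupport hχc
  have hz : ∀ t, t ∉ Icc (-R) R → χ t = 0 := by
    intro t ht
    by_contra hne
    have := hR (subset_tsupport χ (show t ∈ Function.support χ from hne))
    rw [mem_closedBall_zero_iff, Real.norm_eq_abs] at this
    exact ht (abs_le.1 this)
  have hK0 : 0 ≤ K := (norm_nonneg _).trans (hK 0)
  have hpd : ∀ y z, y ∈ Icc (0:ℝ) 1 → z ∈ Icc (0:ℝ) 1 → |∫ v in y..z, p v| ≤ Kp * |z - y| := by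
    intro y z hy hz
    refine intervalIntegral.norm_integral_le_of_norm_le_const fun x hx => hKp x ?_
    exact uIcc_subset_Icc hy hz (uIoc_subset_uIcc hx)
  have hmem : ∀ t x, F t x ∈ Icc (0:ℝ) 1 := fun t x => ⟨(hcdf t).nonneg x, (hcdf t).le_one x⟩
  have hPc : Continuous (fun y => ∫ v in (0:ℝ)..y, p v) :=
    intervalIntegral.continuous_primitive (fun _ _ => hp.intervalIntegrable _ _) 0
  have hint : ∀ t, Integrable (fun x => χ x * ∫ v in (0:ℝ)..F t x, p v) := by
    intro t
    refine Integrable.mul_bdd (c := Kp * 1) hχI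
      (hPc.measurable.comp (hcdf t).1.measurable).aestronglyMeasurable ?_
    refine Eventually.of_forall fun x => ?_
    have h1 := hpd 0 (F t x) (by simp) (hmem t x)
    have hKp0 : 0 ≤ Kp := (norm_nonneg _).trans (hKp 0 (by simp))
    refine h1.trans (mul_le_mul_of_nonneg_left ?_ hKp0)
    rw [sub_zero, abs_of_nonneg (hmem t x).1]; exact (hmem t x).2
  rw [continuous_iff_continuousAt]
  intro t₀
  rw [ContinuousAt, tendsto_iff_norm_sub_tendsto_zero]
  have hlim := (hL1 (-R) R t₀).const_mul (K * Kp)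
  rw [mul_zero] at hlim
  refine squeeze_zero (fun _ => norm_nonneg _) (fun t => ?_) hlim
  rw [← integral_sub (hint t) (hint t₀), ← integral_const_mul, ← integral_indicator measurableSet_Icc]
  have hFi : IntegrableOn (fun x => |F t x - F t₀ x|) (Icc (-R) R) := by
    exact (((hcdf t).1.monotoneOn _).integrableOn_isCompact isCompact_Icc).sub
      (((hcdf t₀).1.monotoneOn _).integrableOn_isCompact isCompact_Icc) |>.abs
  refine norm_integral_le_of_norm_le ((IntegrableOn.integrable_indicator (hFi.const_mul (K * Kp)) measurableSet_Icc)) ?_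
  refine Eventually.of_forall fun x => ?_
  by_cases hx : x ∈ Icc (-R) R
  · rw [indicator_of_mem hx, ← mul_sub, intervalIntegral.integral_interval_sub_left
      (hp.intervalIntegrable _ _) (hp.intervalIntegrable _ _), norm_mul, mul_assoc]
    exact mul_le_mul (hK x) (hpd _ _ (hmem _ _) (hmem _ _)) (norm_nonneg _) hK0
  · rw [indicator_of_notMem hx, hz x hx]; simp

/-- The weak formulation, parametrised by the derivative of the renormalisation. -/
def WeakRen (F L : ℝ → ℝ → ℝ) : Prop :=
  ∀ p : ℝ → ℝ, Continuous p → (∀ x, 0 < p x) → ∫ v in (0:ℝ)..1, p v = 1 →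
    ∀ φ φt : ℝ → ℝ → ℝ, IsTestFun φ φt → ∃ ν : ℝ → Measure ℝ,
      (∀ t, IsProbabilityMeasure (ν t)) ∧
      (∀ t, 0 ≤ t → ∀ x, (ν t (Iic x)).toReal = ∫ v in (0:ℝ)..F t x, p v) ∧
      (∫ t in Ici (0:ℝ), ∫ x : ℝ, φt t x * ∫ v in (0:ℝ)..F t x, p v) +
        (∫ x : ℝ, φ 0 x * ∫ v in (0:ℝ)..F 0 x, p v)
        = ∫ t in Ici (0:ℝ), ∫ x : ℝ, φ t x * L t x ∂(ν t)

lemma step {F L : ℝ → ℝ → ℝ} {M : ℝ} (hF : Measurable (fun z : ℝ × ℝ => F z.1 z.2))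
    (hcdf : ∀ t, IsCDF (F t)) (hL : Measurable (fun z : ℝ × ℝ => L z.1 z.2))
    (hLM : ∀ t x, |L t x| ≤ M)
    (hL1 : ∀ A B t₀ : ℝ, Tendsto (fun t => ∫ x in Icc A B, |F t x - F t₀ x|) (nhds t₀) (nhds 0))
    (hW : WeakRen F L) {χ : ℝ → ℝ} (hχ : Continuous χ) (hχc : HasCompactSupport χ)
    {T : ℝ} (hT : 0 ≤ T) :
    ∀ᵐ v : ℝ, v ∈ Ioo (0:ℝ) 1 →
      (∫ x in Ici (Xq (F T) v), χ x) - (∫ x in Ici (Xq (F 0) v), χ x) +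
        ∫ t in (0:ℝ)..T, χ (Xq (F t) v) * L t (Xq (F t) v) = 0 := by
  have hX := Xq_measurable hF hcdf
  obtain ⟨K, hK⟩ := hχc.exists_bound_of_continuous hχ
  have hK0 : 0 ≤ K := (norm_nonneg _).trans (hK 0)
  have hM0 : 0 ≤ M := (abs_nonneg _).trans (hLM 0 0)
  have hχI : Integrable χ := hχ.integrable_of_hasCompactSupport hχc
  set H : ℝ → ℝ := fun y => ∫ x in Ici y, χ x with hH
  have hHm : Measurable H := by
    have : H = fun y => ∫ x, {z : ℝ × ℝ | z.1 ≤ z.2}.indicator (fun z => χ z.2) (y, x) := by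
      ext y
      simp only [hH]
      rw [← integral_indicator measurableSet_Ici]
      congr 1
    rw [this]
    have hm : Measurable ({z : ℝ × ℝ | z.1 ≤ z.2}.indicator (fun z => χ z.2)) :=
      (hχ.measurable.comp measurable_snd).indicator (measurableSet_le measurable_fst measurable_snd)
    exact (hm.stronglyMeasurable.integral_prod_right').measurable
  have hHb : ∀ y, |H y| ≤ ∫ x, ‖χ x‖ := by
    intro y
    refine (norm_integral_le_integral_norm (μ := volume.restrict (Ici y)) χ).trans ?_
    exact setIntegral_le_integral hχI.norm (Eventually.of_forall fun _ => norm_nonneg _)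
  set Q : ℝ × ℝ → ℝ := fun z => χ (Xq (F z.1) z.2) * L z.1 (Xq (F z.1) z.2) with hQ
  have hQm : Measurable Q :=
    (hχ.measurable.comp hX).mul (hL.comp (measurable_fst.prodMk hX))
  have hQb : ∀ z, ‖Q z‖ ≤ K * M := by
    intro z
    rw [norm_mul]
    exact mul_le_mul (hK _) (hLM _ _) (norm_nonneg _) hK0
  have hXt : ∀ t, Measurable (Xq (F t)) := fun t => Xq_measurable_one (hcdf t)
  have hIm : Measurable (fun v => ∫ t in (0:ℝ)..T, Q (t, v)) := by
    simp_rw [intervalIntegral.integral_of_le hT]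
    exact (hQm.stronglyMeasurable.integral_prod_left').measurable
  have hIb : ∀ v, |∫ t in (0:ℝ)..T, Q (t, v)| ≤ K * M * |T - 0| := fun v =>
    intervalIntegral.norm_integral_le_of_norm_le_const fun t _ => hQb _
  have hTm : ∀ t, Measurable (fun v => H (Xq (F t) v)) := fun t => hHm.comp (hXt t)
  refine W_lemma (W := fun v => H (Xq (F T) v) - H (Xq (F 0) v) + ∫ t in (0:ℝ)..T, Q (t, v))
    (C := (∫ x, ‖χ x‖) + (∫ x, ‖χ x‖) + K * M * |T - 0|) (((hTm T).sub (hTm 0)).add hIm) ?_ ?_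
  · intro v
    refine (abs_add_le _ _).trans (add_le_add ((abs_sub _ _).trans (add_le_add (hHb _) (hHb _))) (hIb v))
  intro p hp hpos hp1
  have hpI : IntegrableOn p (Ioo (0:ℝ) 1) :=
    (hp.integrableOn_Icc (a := 0) (b := 1)).mono_set Ioo_subset_Icc_self
  set a : ℝ → ℝ := fun t => ∫ v in Ioo (0:ℝ) 1, p v * H (Xq (F t) v) with ha
  set b : ℝ → ℝ := fun t => ∫ v in Ioo (0:ℝ) 1, p v * Q (t, v) with hb
  have haeq : ∀ t, ∫ x, χ x * ∫ v in (0:ℝ)..F t x, p v = a t := fun t => a_eq (hcdf t) hp hχ hχc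
  have hac : Continuous a := by
    have := a_cont hcdf hL1 hp hχ hχc
    simp_rw [haeq] at this
    exact this
  have hbm : Measurable b := by
    have hm : Measurable (fun z : ℝ × ℝ => p z.2 * Q z) := (hp.measurable.comp measurable_snd).mul hQm
    exact (hm.stronglyMeasurable.integral_prod_right').measurable
  have hbb : ∀ t, |b t| ≤ ∫ v in Ioo (0:ℝ) 1, p v * (K * M) := by
    intro t
    rw [← Real.norm_eq_abs]
    refine norm_integral_le_of_norm_le (hpI.mul_const (K * M)) (Eventually.of_forall fun v => ?_)
    rw [norm_mul, Real.norm_of_nonneg (hpos v).le]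
    exact mul_le_mul_of_nonneg_left (hQb _) (hpos v).le
  have hkey := time_lemma hac hbm hbb (by
    intro G G' hGc hG'c hd
    have hGcont : Continuous G := continuous_iff_continuousAt.2 fun t => (hd t).continuousAt
    obtain ⟨ν, hν1, hν2, hν3⟩ := hW p hp hpos hp1 (fun t x => G t * χ x) (fun t x => G' t * χ x)
      ⟨by fun_prop, by
        refine HasCompactSupport.intro (hGc.isCompact.prod hχc.isCompact) ?_
        intro z hz
        by_contra hne
        refine hz ⟨subset_tsupport _ (left_ne_zero_of_mul hne), subset_tsupport _ (right_ne_zero_of_mul hne)⟩,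
        by fun_prop, fun t x => (hd t).mul_const _⟩
    have e1 : ∀ t, ∫ x, G' t * χ x * ∫ v in (0:ℝ)..F t x, p v = G' t * a t := by
      intro t
      simp_rw [mul_assoc]
      rw [integral_const_mul, haeq]
    have e2 : ∫ x, G 0 * χ x * ∫ v in (0:ℝ)..F 0 x, p v = G 0 * a 0 := by
      simp_rw [mul_assoc]
      rw [integral_const_mul, haeq]
    have e3 : ∀ t ∈ Ici (0:ℝ), ∫ x, G t * χ x * L t x ∂(ν t) = G t * b t := by
      intro t ht
      simp_rw [mul_assoc]
      have := hν1 t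
      rw [integral_const_mul, nu_eq (f := fun x => χ x * L t x) (hcdf t) hp hpos (ν t) (hν2 t ht)
        (hχ.measurable.mul (hL.comp (measurable_const.prodMk measurable_id)))]
    rw [e2, setIntegral_congr_fun measurableSet_Ici e3] at hν3
    simp_rw [e1] at hν3
    exact hν3) T hT
  have hFub : ∫ v in Ioo (0:ℝ) 1, p v * ∫ t in (0:ℝ)..T, Q (t, v) = ∫ t in (0:ℝ)..T, b t := by
    simp_rw [hb, intervalIntegral.integral_of_le hT, ← integral_const_mul]
    refine integral_integral_swap (f := fun v t => p v * Q (t, v)) ?_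
    have hI := hpI.mul_prod (integrable_const (μ := volume.restrict (Ioc 0 T)) (K * M))
    refine hI.mono ((hp.measurable.comp measurable_fst).mul (hQm.comp measurable_swap)).aestronglyMeasurable ?_
    refine Eventually.of_forall fun z => ?_
    simp only [Function.uncurry, norm_mul (p z.1)]
    refine mul_le_mul_of_nonneg_left ((hQb _).trans (le_abs_self _)) (norm_nonneg _)
  have hi1 : ∀ t, IntegrableOn (fun v => p v * H (Xq (F t) v)) (Ioo 0 1) := fun t =>
    Integrable.mul_bdd hpI (hTm t).aestronglyMeasurable (Eventually.of_forall fun v => hHb _)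
  have hi2 : IntegrableOn (fun v => p v * ∫ t in (0:ℝ)..T, Q (t, v)) (Ioo 0 1) :=
    Integrable.mul_bdd hpI hIm.aestronglyMeasurable (Eventually.of_forall fun v => hIb _)
  have hi3 : IntegrableOn (fun v => p v * H (Xq (F T) v) - p v * H (Xq (F 0) v)) (Ioo 0 1) :=
    (hi1 T).sub (hi1 0)
  simp_rw [mul_add, mul_sub]
  rw [integral_add hi3 hi2, integral_sub (hi1 T) (hi1 0), hFub]
  change a T - a 0 + _ = 0
  rw [hkey]; ring

/-- cutoff -/
def chi (n : ℕ) (x : ℝ) : ℝ := max 0 (min 1 ((n:ℝ) + 1 - |x|))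

lemma chi_cont (n : ℕ) : Continuous (chi n) := by unfold chi; fun_prop

lemma chi_supp (n : ℕ) : HasCompactSupport (chi n) := by
  refine HasCompactSupport.intro (isCompact_closedBall (0:ℝ) ((n:ℝ)+1)) fun x hx => ?_
  rw [mem_closedBall_zero_iff, Real.norm_eq_abs] at hx
  unfold chi
  exact max_eq_left ((min_le_right _ _).trans (by linarith))

lemma chi_one {n : ℕ} {x : ℝ} (h : |x| ≤ n) : chi n x = 1 := by
  unfold chi
  rw [min_eq_left (by linarith), max_eq_right zero_le_one]

lemma chi_le (n : ℕ) (x : ℝ) : |chi n x| ≤ 1 := by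
  have : 0 ≤ chi n x := le_max_left _ _
  rw [abs_of_nonneg this]
  exact max_le zero_le_one (min_le_left _ _)

lemma chi_int {n : ℕ} {x y : ℝ} (hx : |x| ≤ n) (hy : |y| ≤ n) :
    (∫ z in Ici x, chi n z) - (∫ z in Ici y, chi n z) = y - x := by
  have hI : Integrable (chi n) := (chi_cont n).integrable_of_hasCompactSupport (chi_supp n)
  have e : ∀ w : ℝ, ∫ z in Ici w, chi n z = (∫ z, chi n z) - ∫ z in Iic w, chi n z := by
    intro w
    have := integral_add_compl (μ := volume) (measurableSet_Iic (a := w)) hI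
    rw [compl_Iic] at this
    rw [integral_Ici_eq_integral_Ioi]; linarith
  rw [e x, e y]
  have := intervalIntegral.integral_Iic_sub_Iic (μ := volume) (hI.integrableOn (s := Iic x)) (hI.integrableOn (s := Iic y))
  have h2 : ∫ z in x..y, chi n z = ∫ z in x..y, (1:ℝ) := by
    refine intervalIntegral.integral_congr fun z hz => chi_one ?_
    have := uIcc_subset_Icc (abs_le.1 hx) (abs_le.1 hy) hz
    exact abs_le.2 this
  rw [h2, intervalIntegral.integral_const, smul_eq_mul, mul_one] at this
  linarith

lemma core {F L : ℝ → ℝ → ℝ} {M : ℝ} (hF : Measurable (fun z : ℝ × ℝ => F z.1 z.2))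
    (hcdf : ∀ t, IsCDF (F t)) (hL : Measurable (fun z : ℝ × ℝ => L z.1 z.2))
    (hLM : ∀ t x, |L t x| ≤ M)
    (hL1 : ∀ A B t₀ : ℝ, Tendsto (fun t => ∫ x in Icc A B, |F t x - F t₀ x|) (nhds t₀) (nhds 0))
    (hW : WeakRen F L) :
    (∀ v ∈ Ioo (0:ℝ) 1, ∀ t₁ t₂, 0 ≤ t₁ → 0 ≤ t₂ → |Xq (F t₁) v - Xq (F t₂) v| ≤ M * |t₁ - t₂|) ∧
    ∀ᵐ v : ℝ, v ∈ Ioo (0:ℝ) 1 → ∀ t₁ t₂, 0 ≤ t₁ → 0 ≤ t₂ →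
      Xq (F t₂) v - Xq (F t₁) v = ∫ s in t₁..t₂, L s (Xq (F s) v) := by
  have hX := Xq_measurable hF hcdf
  have hLX : ∀ v, Measurable (fun s => L s (Xq (F s) v)) := fun v =>
    hL.comp (measurable_id.prodMk (hX.comp (measurable_id.prodMk measurable_const)))
  have hLi : ∀ v x y, IntervalIntegrable (fun s => L s (Xq (F s) v)) volume x y := by
    intro v x y
    refine (intervalIntegrable_const (c := M)).mono_fun (hLX v).aestronglyMeasurable ?_
    refine Eventually.of_forall fun t => ?_
    simpa using (hLM t _).trans (le_abs_self M)
  have h0 : ∀ T, 0 ≤ T → ∀ᵐ v : ℝ, v ∈ Ioo (0:ℝ) 1 →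
      Xq (F T) v - Xq (F 0) v = ∫ s in (0:ℝ)..T, L s (Xq (F s) v) := by
    intro T hT
    have hn : ∀ᵐ v : ℝ, ∀ n : ℕ, v ∈ Ioo (0:ℝ) 1 →
      (∫ x in Ici (Xq (F T) v), chi n x) - (∫ x in Ici (Xq (F 0) v), chi n x) +
        ∫ t in (0:ℝ)..T, chi n (Xq (F t) v) * L t (Xq (F t) v) = 0 :=
      ae_all_iff.2 fun n => step hF hcdf hL hLM hL1 hW (chi_cont n) (chi_supp n) hT
    filter_upwards [hn] with v hv hv01
    have hlim : Tendsto (fun n : ℕ => ∫ t in (0:ℝ)..T, chi n (Xq (F t) v) * L t (Xq (F t) v)) atTop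
        (nhds (∫ s in (0:ℝ)..T, L s (Xq (F s) v))) := by
      refine intervalIntegral.tendsto_integral_filter_of_dominated_convergence (fun _ => M) ?_ ?_
        intervalIntegrable_const ?_
      · refine Eventually.of_forall fun n => ?_
        exact (((chi_cont n).measurable.comp
          (hX.comp (measurable_id.prodMk measurable_const))).mul (hLX v)).aestronglyMeasurable
      · refine Eventually.of_forall fun n => Eventually.of_forall fun t _ => ?_
        rw [norm_mul]
        have h1 := chi_le n (Xq (F t) v)
        have h2 := hLM t (Xq (F t) v)
        simp only [Real.norm_eq_abs]
        calc _ ≤ 1 * M := mul_le_mul h1 h2 (abs_nonneg _) zero_le_one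
          _ = M := one_mul M
      · refine Eventually.of_forall fun t _ => ?_
        refine tendsto_const_nhds.congr' ?_
        obtain ⟨N, hN⟩ := exists_nat_ge |Xq (F t) v|
        filter_upwards [eventually_ge_atTop N] with n hn
        rw [chi_one (hN.trans (by exact_mod_cast hn)), one_mul]
    refine tendsto_nhds_unique (tendsto_const_nhds.congr' ?_) hlim
    obtain ⟨N, hN⟩ := exists_nat_ge |Xq (F T) v|
    obtain ⟨N', hN'⟩ := exists_nat_ge |Xq (F 0) v|
    filter_upwards [eventually_ge_atTop N, eventually_ge_atTop N'] with n hn hn'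
    have h1 := hv n hv01
    rw [chi_int (hN.trans (by exact_mod_cast hn)) (hN'.trans (by exact_mod_cast hn'))] at h1
    linarith
  have h12 : ∀ t₁ t₂, 0 ≤ t₁ → 0 ≤ t₂ → ∀ᵐ v : ℝ, v ∈ Ioo (0:ℝ) 1 →
      Xq (F t₁) v ≤ Xq (F t₂) v + M * |t₁ - t₂| := by
    intro t₁ t₂ ht₁ ht₂
    filter_upwards [h0 t₁ ht₁, h0 t₂ ht₂] with v h1 h2 hv
    have e1 := h1 hv
    have e2 := h2 hv
    have e3 := intervalIntegral.integral_interval_sub_left (hLi v 0 t₁) (hLi v 0 t₂)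
    have e4 : |∫ s in t₂..t₁, L s (Xq (F s) v)| ≤ M * |t₁ - t₂| := by
      rw [← Real.norm_eq_abs]
      exact intervalIntegral.norm_integral_le_of_norm_le_const fun t _ => hLM _ _
    have := (le_abs_self _).trans e4
    linarith
  have hLip : ∀ v ∈ Ioo (0:ℝ) 1, ∀ t₁ t₂, 0 ≤ t₁ → 0 ≤ t₂ →
      |Xq (F t₁) v - Xq (F t₂) v| ≤ M * |t₁ - t₂| := by
    intro v hv t₁ t₂ ht₁ ht₂
    have e1 := Xq_le_of_ae (hcdf t₁) (hcdf t₂) _ (h12 t₁ t₂ ht₁ ht₂) hv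
    have e2 := Xq_le_of_ae (hcdf t₂) (hcdf t₁) _ (h12 t₂ t₁ ht₂ ht₁) hv
    rw [abs_sub_comm t₂ t₁] at e2
    rw [abs_le]; constructor <;> linarith
  refine ⟨hLip, ?_⟩
  have hq : ∀ᵐ v : ℝ, ∀ q : ℚ, v ∈ Ioo (0:ℝ) 1 →
      Xq (F |(q:ℝ)|) v - Xq (F 0) v = ∫ s in (0:ℝ)..|(q:ℝ)|, L s (Xq (F s) v) :=
    ae_all_iff.2 fun q => h0 _ (abs_nonneg _)
  filter_upwards [hq] with v hv hv01
  have hM0 : 0 ≤ M := (abs_nonneg _).trans (hLM 0 0)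
  have hc1 : Continuous (fun t : ℝ => Xq (F |t|) v - Xq (F 0) v) := by
    refine Continuous.sub ?_ continuous_const
    have : LipschitzWith M.toNNReal (fun t : ℝ => Xq (F |t|) v) := by
      refine LipschitzWith.of_dist_le_mul fun s t => ?_
      rw [Real.dist_eq, Real.dist_eq, Real.coe_toNNReal _ hM0]
      exact (hLip v hv01 _ _ (abs_nonneg _) (abs_nonneg _)).trans
        (mul_le_mul_of_nonneg_left (abs_abs_sub_abs_le _ _) hM0)
    exact this.continuous
  have hc2 : Continuous (fun t : ℝ => ∫ s in (0:ℝ)..|t|, L s (Xq (F s) v)) :=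
    (intervalIntegral.continuous_primitive (hLi v) 0).comp continuous_abs
  have heq := (Rat.denseRange_cast (𝕜 := ℝ)).equalizer hc1 hc2 (funext fun q => hv q hv01)
  have hall : ∀ T, 0 ≤ T → Xq (F T) v - Xq (F 0) v = ∫ s in (0:ℝ)..T, L s (Xq (F s) v) := by
    intro T hT
    have := congrFun heq T
    simpa only [abs_of_nonneg hT] using this
  intro t₁ t₂ ht₁ ht₂
  have e3 := intervalIntegral.integral_interval_sub_left (hLi v 0 t₂) (hLi v 0 t₁)
  rw [← hall t₁ ht₁, ← hall t₂ ht₂] at e3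
  linarith

/-- **Renormalised solutions follow the characteristics**: if `u` is a renormalised
solution in the `γ`-th coordinate, then for a.e. `v ∈ (0,1)` the quantile trajectory
`t ↦ X_v^γ(t)` is Lipschitz on `[0,∞)` and satisfies
`X_v^γ(t₂) − X_v^γ(t₁) = ∫_{t₁}^{t₂} λ^γ{u}(s, X_v^γ(s)) ds`. -/
theorem renormalised_implies_characteristics {d : ℕ} (hd : 1 ≤ d)
    (lam : Fin d → (Fin d → ℝ) → ℝ)
    (hlam : ∀ γ : Fin d, ContinuousOn (lam γ) (Icc (0 : Fin d → ℝ) 1))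
    (u : Fin d → ℝ → ℝ → ℝ) (u0 : Fin d → ℝ → ℝ)
    (hsol : IsProbSol lam u u0)
    (hinit : ∀ (γ : Fin d) (x : ℝ), u γ 0 x = u0 γ x)
    (hL1 : ContL1loc u)
    (γ : Fin d) (hren : IsRenormalised lam u u0 γ) :
    ∀ᵐ v ∂(volume.restrict (Ioo (0:ℝ) 1)),
      (∃ K : NNReal, LipschitzOnWith K (fun t => cdfInv (u γ t) v) (Ici 0)) ∧
      ∀ t₁ t₂ : ℝ, 0 ≤ t₁ → t₁ ≤ t₂ →
        cdfInv (u γ t₂) v - cdfInv (u γ t₁) v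
          = ∫ s in t₁..t₂, lamBrace lam u γ s (cdfInv (u γ s) v) := by
  obtain ⟨hmeas, hcdf, _, _⟩ := hsol
  obtain ⟨M, hM⟩ := isCompact_Icc.exists_bound_of_continuousOn (hlam γ)
  set F : ℝ → ℝ → ℝ := fun t x => u γ (max t 0) x with hFdef
  set L : ℝ → ℝ → ℝ := fun t x => lamBrace lam u γ (max t 0) x with hLdef
  have hmax : ∀ t : ℝ, 0 ≤ max t 0 := fun t => le_max_right _ _
  have hum : ∀ i, Measurable (fun z : ℝ × ℝ => u i (max z.1 0) z.2) := by
    intro i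
    have h1 : Measurable (fun z : ℝ × ℝ => ((⟨max z.1 0, hmax z.1⟩ : Ici (0:ℝ)), z.2)) :=
      ((measurable_fst.max measurable_const).subtype_mk).prodMk measurable_snd
    exact (hmeas i).comp h1
  have hF : Measurable (fun z : ℝ × ℝ => F z.1 z.2) := hum γ
  have hc : ∀ t, IsCDF (F t) := fun t => hcdf γ _ (hmax t)
  have hleft : Measurable (fun z : ℝ × ℝ => Function.leftLim (F z.1) z.2) := by
    refine measurable_of_tendsto_metrizable
      (f := fun (n : ℕ) (z : ℝ × ℝ) => F z.1 (z.2 - 1 / ((n:ℝ) + 1))) (fun n => ?_) ?_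
    · exact hF.comp (measurable_fst.prodMk (measurable_snd.sub_const _))
    · rw [tendsto_pi_nhds]
      intro z
      refine ((hc z.1).1.tendsto_leftLim z.2).comp ?_
      refine tendsto_nhdsWithin_iff.2 ⟨?_, Eventually.of_forall fun n => ?_⟩
      · simpa using (tendsto_const_nhds (x := z.2)).sub tendsto_one_div_add_atTop_nhds_zero_nat
      · have : (0:ℝ) < 1 / ((n:ℝ) + 1) := by positivity
        simp only [mem_Iio]; linarith
  have hl0 : ∀ t x, 0 ≤ Function.leftLim (F t) x := fun t x =>
    ((hc t).nonneg (x - 1)).trans ((hc t).1.le_leftLim (by linarith))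
  have hl1 : ∀ t x, Function.leftLim (F t) x ≤ 1 := fun t x =>
    ((hc t).1.leftLim_le le_rfl).trans ((hc t).le_one x)
  set w : (ℝ × ℝ) × ℝ → Fin d → ℝ := fun q =>
    Function.update (fun i => u i (max q.1.1 0) q.1.2) γ
      ((1 - q.2) * Function.leftLim (F q.1.1) q.1.2 + q.2 * F q.1.1 q.1.2) with hw
  have hwm : Measurable w := by
    refine measurable_pi_iff.2 fun i => ?_
    by_cases hi : i = γ
    · subst hi
      simp only [hw, Function.update_self]
      exact ((measurable_const.sub measurable_snd).mul (hleft.comp measurable_fst)).add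
        (measurable_snd.mul (hF.comp measurable_fst))
    · simp only [hw, Function.update_of_ne hi]
      exact (hum i).comp measurable_fst
  have hwI : ∀ z θ, θ ∈ Icc (0:ℝ) 1 → w (z, θ) ∈ Icc (0 : Fin d → ℝ) 1 := by
    intro z θ hθ
    have key : ∀ i, 0 ≤ w (z, θ) i ∧ w (z, θ) i ≤ 1 := by
      intro i
      by_cases hi : i = γ
      · subst hi
        simp only [hw, Function.update_self]
        have a1 := hl0 z.1 z.2
        have a2 := hl1 z.1 z.2
        have a3 := (hc z.1).nonneg z.2
        have a4 := (hc z.1).le_one z.2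
        have a5 : 0 ≤ 1 - θ := by linarith [hθ.2]
        constructor
        · exact add_nonneg (mul_nonneg a5 a1) (mul_nonneg hθ.1 a3)
        · nlinarith [mul_le_mul_of_nonneg_left a2 a5, mul_le_mul_of_nonneg_left a4 hθ.1]
      · simp only [hw, Function.update_of_ne hi]
        exact ⟨(hcdf i _ (hmax z.1)).nonneg _, (hcdf i _ (hmax z.1)).le_one _⟩
    exact ⟨fun i => (key i).1, fun i => (key i).2⟩
  set cl : (Fin d → ℝ) → Fin d → ℝ := fun y i => max 0 (min 1 (y i)) with hcl
  have hclc : Continuous cl := by fun_prop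
  have hclI : ∀ y, cl y ∈ Icc (0 : Fin d → ℝ) 1 := fun y =>
    ⟨fun i => le_max_left _ _, fun i => max_le zero_le_one (min_le_left _ _)⟩
  have hclid : ∀ y ∈ Icc (0 : Fin d → ℝ) 1, cl y = y := by
    intro y hy
    funext i
    have h1 : 0 ≤ y i := hy.1 i
    have h2 : y i ≤ 1 := hy.2 i
    simp only [hcl, min_eq_right h2, max_eq_right h1]
  have hΛ : Continuous (fun y => lam γ (cl y)) := (hlam γ).comp_continuous hclc hclI
  have hLeq : ∀ t x, L t x = ∫ θ in Ioc (0:ℝ) 1, lam γ (cl (w ((t, x), θ))) := by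
    intro t x
    simp only [hLdef, lamBrace]
    rw [intervalIntegral.integral_of_le zero_le_one]
    refine setIntegral_congr_fun measurableSet_Ioc fun θ hθ => ?_
    simp only [hclid _ (hwI (t, x) θ ⟨hθ.1.le, hθ.2⟩)]
    rfl
  have hL : Measurable (fun z : ℝ × ℝ => L z.1 z.2) := by
    simp_rw [hLeq]
    have hm : Measurable (fun q => lam γ (cl (w q))) := hΛ.measurable.comp hwm
    exact (hm.stronglyMeasurable.integral_prod_right').measurable
  have hLM : ∀ t x, |L t x| ≤ M := by
    intro t x
    rw [hLeq, ← intervalIntegral.integral_of_le zero_le_one, ← Real.norm_eq_abs]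
    have := intervalIntegral.norm_integral_le_of_norm_le_const (a := (0:ℝ)) (b := 1)
      (f := fun θ => lam γ (cl (w ((t, x), θ)))) (C := M) (fun θ _ => hM _ (hclI _))
    simpa using this
  have hL1' : ∀ A B t₀ : ℝ,
      Tendsto (fun t => ∫ x in Icc A B, |F t x - F t₀ x|) (nhds t₀) (nhds 0) := by
    intro A B t₀
    refine (hL1 γ A B (max t₀ 0) (hmax t₀)).comp ?_
    refine tendsto_nhdsWithin_iff.2 ⟨?_, Eventually.of_forall fun t => hmax t⟩
    exact (continuous_id.max continuous_const).tendsto t₀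
  have hW : WeakRen F L := by
    intro p hp hpos hp1 φ φt hφ
    have hd' : ∀ y, HasDerivAt (fun y => ∫ v in (0:ℝ)..y, p v) (p y) y := fun y =>
      intervalIntegral.integral_hasDerivAt_right (hp.intervalIntegrable _ _)
        (hp.stronglyMeasurableAtFilter _ _) hp.continuousAt
    have hder : deriv (fun y => ∫ v in (0:ℝ)..y, p v) = p := funext fun y => (hd' y).deriv
    have hcd : ContDiff ℝ 1 (fun y => ∫ v in (0:ℝ)..y, p v) := by
      rw [contDiff_one_iff_deriv]
      exact ⟨fun y => (hd' y).differentiableAt, by rw [hder]; exact hp⟩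
    have hmono : StrictMono (fun y => ∫ v in (0:ℝ)..y, p v) :=
      strictMono_of_deriv_pos fun y => by rw [hder]; exact hpos y
    obtain ⟨ν, h1, h2, h3⟩ := hren (fun y => ∫ v in (0:ℝ)..y, p v) hcd.contDiffOn
      (hmono.strictMonoOn _) (by simp) hp1 φ φt hφ
    have hFt : ∀ t, 0 ≤ t → F t = u γ t := fun t ht => by
      funext x; simp only [hFdef, max_eq_left ht]
    have hLt : ∀ t, 0 ≤ t → L t = lamBrace lam u γ t := fun t ht => by
      funext x; simp only [hLdef, max_eq_left ht]
    refine ⟨ν, h1, fun t ht x => by rw [hFt t ht]; exact h2 t ht x, ?_⟩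
    have e0 : ∀ x, u0 γ x = F 0 x := fun x => by rw [hFt 0 le_rfl, hinit]
    simp_rw [e0] at h3
    rw [setIntegral_congr_fun measurableSet_Ici
      (g := fun t => ∫ x : ℝ, φt t x * ∫ v in (0:ℝ)..u γ t x, p v)
      (fun t ht => by simp only [hFt t ht]), h3]
    exact setIntegral_congr_fun measurableSet_Ici (fun t ht => by simp only [hLt t ht])
  obtain ⟨hA, hB⟩ := core hF hc hL hLM hL1' hW
  have hM0 : 0 ≤ M := (abs_nonneg _).trans (hLM 0 0)
  have hXe : ∀ v ∈ Ioo (0:ℝ) 1, ∀ t, 0 ≤ t → Xq (F t) v = cdfInv (u γ t) v := by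
    intro v hv t ht
    rw [Xq_of_mem _ hv]
    simp only [hFdef, max_eq_left ht]
  rw [ae_restrict_iff' measurableSet_Ioo]
  filter_upwards [hB] with v hv hv01
  refine ⟨⟨M.toNNReal, LipschitzOnWith.of_dist_le_mul fun s hs t ht => ?_⟩, ?_⟩
  · rw [Real.dist_eq, Real.dist_eq, Real.coe_toNNReal _ hM0, ← hXe v hv01 s hs, ← hXe v hv01 t ht]
    exact hA v hv01 s t hs ht
  · intro t₁ t₂ ht₁ h12
    rw [← hXe v hv01 t₁ ht₁, ← hXe v hv01 t₂ (ht₁.trans h12), hv hv01 t₁ t₂ ht₁ (ht₁.trans h12)]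
    refine intervalIntegral.integral_congr fun s hs => ?_
    rw [uIcc_of_le h12] at hs
    have hs0 : 0 ≤ s := ht₁.trans hs.1
    simp only [hXe v hv01 s hs0, hLdef, max_eq_left hs0]
end
end

section
/- Under Assumption (C), let u = (u¹,…,u^d) be a probabilistic solution with initial data (u₀¹,…,u₀^d) satisfying u^γ(0,·) = u₀^γ for every γ, and such that t ↦ u(t,·) is continuous in L¹_loc(ℝ)^d. Fix γ ∈ {1,…,d} and suppose that for Lebesgue-almost every v ∈ (0,1) the quantile trajectory t ↦ X_v^γ(t) is Lipschitz continuous and satisfies X_v^γ(t₂) − X_v^γ(t₁) = ∫_{t₁}^{t₂} λ^γ{u}(s, X_v^γ(s)) ds for all 0 ≤ t₁ ≤ t₂. Then u is a renormalised solution in the γ-th coordinate. -/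
open MeasureTheory Filter Set

noncomputable section

lemma aux_supp {φ φt : ℝ → ℝ → ℝ} (h : IsTestFun φ φt) :
    ∃ R C : ℝ, 0 < R ∧ 0 ≤ C ∧ (∀ t x, (R ≤ |t| ∨ R ≤ |x|) → φ t x = 0 ∧ φt t x = 0) ∧
      (∀ t x, |φ t x| ≤ C) ∧ (∀ t x, |φt t x| ≤ C) := by
  obtain ⟨hc, hs, hct, hd⟩ := h
  have hst : ∀ p : ℝ × ℝ, p ∉ tsupport (fun p : ℝ × ℝ => φ p.1 p.2) → φt p.1 p.2 = 0 := by
    intro p hp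
    have h1 : ∀ᶠ q in nhds p, φ q.1 q.2 = 0 := by
      have := (notMem_tsupport_iff_eventuallyEq.mp hp)
      filter_upwards [this] with q hq using hq
    have h2 : ∀ᶠ s in nhds p.1, φ s p.2 = 0 := by
      have hcont : ContinuousAt (fun s : ℝ => (s, p.2)) p.1 := by fun_prop
      exact hcont.eventually h1
    have h3 : HasDerivAt (fun s => φ s p.2) 0 p.1 :=
      (hasDerivAt_const p.1 (0:ℝ)).congr_of_eventuallyEq h2
    exact (hd p.1 p.2).unique h3
  have hs2 : HasCompactSupport (fun p : ℝ × ℝ => φt p.1 p.2) := HasCompactSupport.intro hs hst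
  obtain ⟨R, hR⟩ := hs.isBounded.subset_closedBall 0
  obtain ⟨C1, hC1⟩ := hc.bounded_above_of_compact_support hs
  obtain ⟨C2, hC2⟩ := hct.bounded_above_of_compact_support hs2
  refine ⟨max R 0 + 1, max C1 C2, by positivity, ?_, ?_, ?_, ?_⟩
  · exact le_trans (norm_nonneg _) ((hC1 (0, 0)).trans (le_max_left _ _))
  · intro t x htx
    have hp : ((t, x) : ℝ × ℝ) ∉ tsupport (fun p : ℝ × ℝ => φ p.1 p.2) := by
      intro hmem
      have := hR hmem
      rw [mem_closedBall_zero_iff, Prod.norm_def] at this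
      have h1 := (max_le_iff.mp this).1
      have h2 := (max_le_iff.mp this).2
      simp only [Real.norm_eq_abs] at h1 h2
      have := le_max_left R 0
      rcases htx with h | h <;> linarith
    exact ⟨image_eq_zero_of_notMem_tsupport (f := fun p : ℝ × ℝ => φ p.1 p.2) hp, hst _ hp⟩
  · exact fun t x => (hC1 (t, x)).trans (le_max_left _ _)
  · exact fun t x => (hC2 (t, x)).trans (le_max_right _ _)

lemma aux_cont {f : ℝ → ℝ → ℝ} (hf : Continuous (fun p : ℝ × ℝ => f p.1 p.2)) (R : ℝ) :
    Continuous (fun p : ℝ × ℝ => ∫ x in p.2..R, f p.1 x) := by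
  simp_rw [fun p : ℝ × ℝ => intervalIntegral.integral_symm (f := f p.1) (μ := volume) R p.2]
  refine Continuous.neg ?_
  refine intervalIntegral.continuous_parametric_intervalIntegral_of_continuous
    (f := fun (p : ℝ × ℝ) x => f p.1 x) ?_ continuous_snd
  exact hf.comp (by fun_prop : Continuous fun q : (ℝ × ℝ) × ℝ => (q.1.1, q.2))

lemma aux_strict {φ φt : ℝ → ℝ → ℝ} (h : IsTestFun φ φt) (R : ℝ) (p : ℝ × ℝ) :
    HasStrictFDerivAt (fun p : ℝ × ℝ => ∫ x in p.2..R, φ p.1 x)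
      ((ContinuousLinearMap.toSpanSingleton ℝ (∫ x in p.2..R, φt p.1 x)).coprod
        (ContinuousLinearMap.toSpanSingleton ℝ (-φ p.1 p.2))) p := by
  obtain ⟨R', C, hR', hC, hz, hb, hbt⟩ := aux_supp h
  obtain ⟨hc, hs, hct, hd⟩ := h
  have key := hasStrictFDerivAt_uncurry_coprod (𝕜 := ℝ) (u := p)
    (f := fun t y => ∫ x in y..R, φ t x)
    (f₁ := fun t y => ContinuousLinearMap.toSpanSingleton ℝ (∫ x in y..R, φt t x))
    (f₂ := fun t y => ContinuousLinearMap.toSpanSingleton ℝ (-φ t y)) ?_ ?_ ?_ ?_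
  · exact key
  · refine Eventually.of_forall fun v => ?_
    have := (intervalIntegral.hasDerivAt_integral_of_dominated_loc_of_deriv_le
      (μ := volume) (F := φ) (F' := φt) (x₀ := v.1) (s := univ) (a := v.2) (b := R)
      (bound := fun _ => C) univ_mem ?_ ?_ ?_ ?_ ?_ ?_).2
    · exact this.hasFDerivAt
    · refine Eventually.of_forall fun x => ?_
      exact (hc.comp (by fun_prop : Continuous fun y : ℝ => (x, y))).aestronglyMeasurable
    · exact (hc.comp (by fun_prop : Continuous fun y : ℝ => (v.1, y))).intervalIntegrable _ _
    · exact (hct.comp (by fun_prop : Continuous fun y : ℝ => (v.1, y))).aestronglyMeasurable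
    · exact Eventually.of_forall fun y _ t _ => hbt t y
    · exact intervalIntegrable_const
    · exact Eventually.of_forall fun y _ t _ => hd t y
  · refine Eventually.of_forall fun v => ?_
    have hcy : Continuous (φ v.1) := hc.comp (by fun_prop : Continuous fun y : ℝ => (v.1, y))
    exact (intervalIntegral.integral_hasDerivAt_left (hcy.intervalIntegrable _ _)
      hcy.stronglyMeasurable.stronglyMeasurableAtFilter hcy.continuousAt).hasFDerivAt
  · have := aux_cont hct R
    exact ((ContinuousLinearMap.toSpanSingletonCLE (𝕜 := ℝ) (E := ℝ)).continuous.comp this).continuousAt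
  · exact ((ContinuousLinearMap.toSpanSingletonCLE (𝕜 := ℝ) (E := ℝ)).continuous.comp hc.neg).continuousAt

lemma aux_chain {φ φt : ℝ → ℝ → ℝ} (h : IsTestFun φ φt) {R : ℝ} (hR : 0 < R)
    (hz : ∀ t x, (R ≤ |t| ∨ R ≤ |x|) → φ t x = 0 ∧ φt t x = 0)
    {X g : ℝ → ℝ} {K : NNReal} (hX : LipschitzWith K X)
    (hg : IntervalIntegrable g volume 0 R)
    (hXg : ∀ t, 0 ≤ t → X t - X 0 = ∫ s in (0:ℝ)..t, g s) :
    ∫ t in (0:ℝ)..R, ((∫ x in X t..R, φt t x) - φ t (X t) * g t)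
      = - ∫ x in X 0..R, φ 0 x := by
  have hLL : LocallyLipschitz (fun p : ℝ × ℝ => ∫ x in p.2..R, φ p.1 x) := fun p =>
    (aux_strict h R p).exists_lipschitzOnWith
  have hLL2 : LocallyLipschitz (fun t : ℝ => ∫ x in X t..R, φ t x) :=
    hLL.comp (f := fun p : ℝ × ℝ => ∫ x in p.2..R, φ p.1 x) (g := fun t => (t, X t))
      (LipschitzWith.id.prodMk hX).locallyLipschitz
  obtain ⟨K', hK'⟩ := (hLL2.locallyLipschitzOn (s := uIcc 0 R)).exists_lipschitzOnWith_of_compact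
    isCompact_uIcc
  have hac := hK'.absolutelyContinuousOnInterval.integral_deriv_eq_sub
  have hlast : ∫ x in X R..R, φ R x = 0 := by
    simp [fun x => (hz R x (Or.inl (le_abs_self R))).1]
  rw [hlast, zero_sub] at hac
  rw [← hac]
  refine intervalIntegral.integral_congr_ae ?_
  filter_upwards [hg.ae_hasDerivAt_integral, Measure.ae_ne volume R] with t ht hne hmem
  rw [uIoc_of_le hR.le] at hmem
  have h1 := ht (by rw [uIcc_of_le hR.le]; exact ⟨hmem.1.le, hmem.2⟩) 0 (by simp)
  have h2 : HasDerivAt X (g t) t := by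
    refine (h1.const_add (X 0)).congr_of_eventuallyEq ?_
    filter_upwards [Ioi_mem_nhds hmem.1] with s hs
    rw [← hXg s (le_of_lt hs)]; ring
  have h3 := (aux_strict h R (t, X t)).hasFDerivAt.comp_hasDerivAt t ((hasDerivAt_id t).prodMk h2)
  have h4 := h3.deriv
  simp only [Function.comp_def, id] at h4
  rw [h4]
  simp [ContinuousLinearMap.toSpanSingleton_apply]
  ring

lemma aux_cdf_mem {F : ℝ → ℝ} (hF : IsCDF F) (x : ℝ) : F x ∈ Icc (0:ℝ) 1 :=
  ⟨hF.1.le_of_tendsto hF.2.2.1 x, hF.1.ge_of_tendsto hF.2.2.2 x⟩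

lemma aux_galois {F : ℝ → ℝ} (hF : IsCDF F) {v : ℝ} (hv : v ∈ Ioo (0:ℝ) 1) (x : ℝ) :
    cdfInv F v ≤ x ↔ v ≤ F x := by
  obtain ⟨hm, hr, h0, h1⟩ := hF
  have hne : {x : ℝ | v ≤ F x}.Nonempty := by
    obtain ⟨y, hy⟩ := (h1.eventually (lt_mem_nhds hv.2)).exists
    exact ⟨y, le_of_lt hy⟩
  have hbdd : BddBelow {x : ℝ | v ≤ F x} := by
    obtain ⟨y, hy⟩ := (h0.eventually (gt_mem_nhds hv.1)).exists
    refine ⟨y, fun z hz => ?_⟩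
    by_contra hlt
    have := hm (le_of_not_ge hlt)
    have hz' : v ≤ F z := hz
    linarith
  constructor
  · intro hx
    have hc := (hr x).mono Ioi_subset_Ici_self
    refine ge_of_tendsto hc ?_
    filter_upwards [self_mem_nhdsWithin] with y hy
    obtain ⟨s, hs, hsy⟩ := exists_lt_of_csInf_lt hne (lt_of_le_of_lt hx hy)
    exact le_trans hs (hm hsy.le)
  · intro hx
    exact csInf_le hbdd hx

lemma aux_meas {β : ℝ → ℝ} (hβ : ContDiffOn ℝ 1 β (Icc 0 1)) (hmono : StrictMonoOn β (Icc 0 1))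
    (h0 : β 0 = 0) (h1 : β 1 = 1) :
    ∃ m : Measure ℝ, IsProbabilityMeasure m ∧ m ≪ volume.restrict (Ioo (0:ℝ) 1) ∧
      ∀ w ∈ Icc (0:ℝ) 1, (m (Iic w)).toReal = β w := by
  set b := derivWithin β (Icc 0 1) with hb
  have hbc : ContinuousOn b (Icc 0 1) :=
    hβ.continuousOn_derivWithin (uniqueDiffOn_Icc one_pos) le_rfl
  have hbn : ∀ x, 0 ≤ b x := fun x => hmono.monotoneOn.derivWithin_nonneg
  have key : ∀ w ∈ Icc (0:ℝ) 1, ∫⁻ v in Ioo 0 w, ENNReal.ofReal (b v) = ENNReal.ofReal (β w) := by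
    intro w hw
    have hii : IntervalIntegrable b volume 0 w := by
      refine ContinuousOn.intervalIntegrable ?_
      rw [uIcc_of_le hw.1]
      exact hbc.mono (Icc_subset_Icc le_rfl hw.2)
    have hftc := intervalIntegral.integral_eq_sub_of_hasDerivAt_of_le hw.1
      (hβ.continuousOn.mono (Icc_subset_Icc le_rfl hw.2)) (f' := b) (fun x hx => by
        have hx' : x ∈ Ioo (0:ℝ) 1 := ⟨hx.1, hx.2.trans_le hw.2⟩
        have hd := (hβ.differentiableOn one_ne_zero x (Ioo_subset_Icc_self hx')).hasDerivWithinAt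
        exact hd.hasDerivAt (Icc_mem_nhds hx'.1 hx'.2)) hii
    rw [h0, sub_zero, intervalIntegral.integral_of_le hw.1] at hftc
    rw [← hftc, ofReal_integral_eq_lintegral_ofReal hii.1 (Eventually.of_forall hbn)]
    exact setLIntegral_congr Ioo_ae_eq_Ioc
  refine ⟨(volume.restrict (Ioo (0:ℝ) 1)).withDensity (fun v => ENNReal.ofReal (b v)), ⟨?_⟩,
    withDensity_absolutelyContinuous _ _, ?_⟩
  · rw [withDensity_apply _ MeasurableSet.univ, Measure.restrict_univ, key 1 (by simp), h1]
    simp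
  · intro w hw
    rw [withDensity_apply _ measurableSet_Iic, Measure.restrict_restrict measurableSet_Iic]
    have hβw : 0 ≤ β w := by
      rw [← h0]; exact hmono.monotoneOn (by simp) hw hw.1
    have : (Iic w ∩ Ioo 0 1 : Set ℝ) =ᵐ[volume] Ioo 0 w := by
      have h2 : (Iic w ∩ Ioo 0 1 : Set ℝ) =ᵐ[volume] (Iio w ∩ Ioo 0 1 : Set ℝ) :=
        Iio_ae_eq_Iic.symm.inter (ae_eq_refl _)
      have h3 : (Iio w ∩ Ioo 0 1 : Set ℝ) = Ioo 0 w := by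
        ext x
        simp only [mem_inter_iff, mem_Iio, mem_Ioo]
        constructor
        · rintro ⟨a, b, c⟩; exact ⟨b, a⟩
        · rintro ⟨a, c⟩; exact ⟨c, a, c.trans_le hw.2⟩
      rwa [h3] at h2
    rw [setLIntegral_congr this, key w hw, ENNReal.toReal_ofReal hβw]

lemma aux_fub {f : ℝ → ℝ} (hf : Continuous f) {R : ℝ} (hz : ∀ x, R ≤ |x| → f x = 0)
    (ν : Measure ℝ) [IsProbabilityMeasure ν] :
    ∫ x, f x * (ν (Iic x)).toReal = ∫ y, (∫ x in y..R, f x) ∂ν := by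
  have hfi : Integrable f := by
    refine hf.integrable_of_hasCompactSupport ?_
    refine HasCompactSupport.intro (isCompact_Icc (a := -R) (b := R)) fun x hx => hz x ?_
    by_contra hlt
    exact hx (abs_le.mp (le_of_not_ge hlt))
  have hms : MeasurableSet {p : ℝ × ℝ | p.2 ≤ p.1} := measurableSet_le measurable_snd measurable_fst
  have hint : Integrable (fun p : ℝ × ℝ => {p : ℝ × ℝ | p.2 ≤ p.1}.indicator (fun p => f p.1) p)
      (volume.prod ν) := (hfi.comp_fst ν).indicator hms
  have e1 : ∀ x, f x * (ν (Iic x)).toReal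
      = ∫ y, {p : ℝ × ℝ | p.2 ≤ p.1}.indicator (fun p => f p.1) (x, y) ∂ν := by
    intro x
    have : (fun y => {p : ℝ × ℝ | p.2 ≤ p.1}.indicator (fun p => f p.1) (x, y))
        = (Iic x).indicator (fun _ => f x) := by
      ext y; simp [indicator]
    rw [this, integral_indicator measurableSet_Iic, setIntegral_const, smul_eq_mul, mul_comm]
    rfl
  simp_rw [e1]
  rw [integral_integral_swap (f := fun x y => {p : ℝ × ℝ | p.2 ≤ p.1}.indicator (fun p => f p.1) (x, y)) hint]
  congr 1; ext y
  have : (fun x => {p : ℝ × ℝ | p.2 ≤ p.1}.indicator (fun p => f p.1) (x, y))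
        = (Ici y).indicator f := by
      ext y; simp [indicator]
  rw [this, integral_indicator measurableSet_Ici, integral_Ici_eq_integral_Ioi,
    ← intervalIntegral.integral_interval_add_Ioi (b := R) hfi.integrableOn hfi.integrableOn]
  rw [setIntegral_eq_zero_of_forall_eq_zero (t := Ioi R), add_zero]
  intro x hx
  exact hz x ((le_of_lt hx).trans (le_abs_self x))

lemma aux_bd {f : ℝ → ℝ} {R C : ℝ} (hz : ∀ x, R ≤ |x| → f x = 0)
    (hC : ∀ x, |f x| ≤ C) (y : ℝ) :
    ‖∫ x in y..R, f x‖ ≤ ∫ x in Icc (-R) R, C := by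
  have h0 : 0 ≤ C := (abs_nonneg _).trans (hC 0)
  have hi : Integrable ((Icc (-R) R).indicator (fun _ => C)) :=
    (integrable_indicator_iff measurableSet_Icc).mpr (integrableOn_const (by simp))
  rw [← integral_indicator measurableSet_Icc, intervalIntegral.norm_intervalIntegral_eq]
  refine (norm_integral_le_of_norm_le hi.integrableOn (Eventually.of_forall fun x => ?_)).trans
    (setIntegral_le_integral hi (Eventually.of_forall (indicator_nonneg (fun _ _ => h0))))
  by_cases hx : x ∈ Icc (-R) R
  · simpa [hx] using hC x
  · rw [indicator_of_notMem hx, hz x, norm_zero]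
    by_contra hlt
    exact hx (abs_le.mp (le_of_not_ge hlt))

lemma aux_core {U G : ℝ → ℝ → ℝ} {M : ℝ} (hU : ∀ t, IsCDF (U t))
    (hUm : Measurable (fun p : ℝ × ℝ => U p.1 p.2))
    (hGm : Measurable (fun p : ℝ × ℝ => G p.1 p.2)) (hG : ∀ t x, |G t x| ≤ M)
    (hchar : ∀ᵐ v ∂(volume.restrict (Ioo (0:ℝ) 1)),
      (∃ K : NNReal, LipschitzWith K (fun t => cdfInv (U t) v)) ∧
      ∀ t : ℝ, 0 ≤ t →
        cdfInv (U t) v - cdfInv (U 0) v = ∫ s in (0:ℝ)..t, G s (cdfInv (U s) v))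
    {β : ℝ → ℝ} (hβ : ContDiffOn ℝ 1 β (Icc 0 1)) (hmono : StrictMonoOn β (Icc 0 1))
    (h0 : β 0 = 0) (h1 : β 1 = 1) {φ φt : ℝ → ℝ → ℝ} (h : IsTestFun φ φt) :
    ∃ ν : ℝ → Measure ℝ,
        (∀ t : ℝ, IsProbabilityMeasure (ν t)) ∧
        (∀ t : ℝ, ∀ x : ℝ, (ν t (Iic x)).toReal = β (U t x)) ∧
        (∫ t in Ici (0:ℝ), ∫ x : ℝ, φt t x * β (U t x)) +
            (∫ x : ℝ, φ 0 x * β (U 0 x))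
          = ∫ t in Ici (0:ℝ), ∫ x : ℝ, φ t x * G t x ∂(ν t) := by
  obtain ⟨R, C, hR, hC, hz, hb, hbt⟩ := aux_supp h
  obtain ⟨m, hm, hmac, hmβ⟩ := aux_meas hβ hmono h0 h1
  have hc := h.1
  have hct := h.2.2.1
  have hM : 0 ≤ M := (abs_nonneg _).trans (hG 0 0)
  classical
  set X : ℝ → ℝ → ℝ := fun t v => if v ∈ Ioo (0:ℝ) 1 then cdfInv (U t) v else 0 with hX
  have hXm : Measurable (fun p : ℝ × ℝ => X p.1 p.2) := by
    refine measurable_of_Iic fun x => ?_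
    have e : (fun p : ℝ × ℝ => X p.1 p.2) ⁻¹' Iic x
        = ({p : ℝ × ℝ | p.2 ∈ Ioo (0:ℝ) 1} ∩ {p | p.2 ≤ U p.1 x}) ∪
          ({p : ℝ × ℝ | p.2 ∈ Ioo (0:ℝ) 1}ᶜ ∩ {_p | (0:ℝ) ≤ x}) := by
      ext ⟨t, v⟩
      by_cases hv : v ∈ Ioo (0:ℝ) 1
      · have := aux_galois (hU t) hv x
        simp only [mem_preimage, hX, if_pos hv, mem_Iic, this]
        simp [hv, -mem_Ioo]
      · simp only [mem_preimage, hX, if_neg hv, mem_Iic]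
        simp [hv, -mem_Ioo]
    rw [e]
    have hs : MeasurableSet {p : ℝ × ℝ | p.2 ∈ Ioo (0:ℝ) 1} := measurable_snd measurableSet_Ioo
    refine (hs.inter ?_).union (hs.compl.inter (MeasurableSet.const _))
    exact measurableSet_le measurable_snd
      (hUm.comp (measurable_fst.prodMk (measurable_const (a := x))))
  have hXt : ∀ t, Measurable (X t) := fun t => hXm.comp measurable_prodMk_left
  have hXv : ∀ v, Measurable (fun t => X t v) := fun v => hXm.comp measurable_prodMk_right
  have hmem : ∀ᵐ v ∂m, v ∈ Ioo (0:ℝ) 1 := hmac.ae_le (ae_restrict_mem measurableSet_Ioo)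
  have hνp : ∀ t, IsProbabilityMeasure (m.map (X t)) := fun t =>
    Measure.isProbabilityMeasure_map (hXt t).aemeasurable
  have hν : ∀ t x, ((m.map (X t)) (Iic x)).toReal = β (U t x) := by
    intro t x
    rw [Measure.map_apply (hXt t) measurableSet_Iic, ← hmβ _ (aux_cdf_mem (hU t) x)]
    congr 1
    refine measure_congr ?_
    filter_upwards [hmem] with v hv
    have := aux_galois (hU t) hv x
    refine propext ?_
    change X t v ≤ x ↔ v ≤ U t x
    simp only [hX, if_pos hv, this]
  refine ⟨fun t => m.map (X t), hνp, hν, ?_⟩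
  -- continuity of the primitives
  have hΦt := aux_cont hct R
  have hΦ := aux_cont hc R
  have hct1 : ∀ t, Continuous (φt t) := fun t =>
    hct.comp (by fun_prop : Continuous fun y : ℝ => (t, y))
  have hc1 : ∀ t, Continuous (φ t) := fun t =>
    hc.comp (by fun_prop : Continuous fun y : ℝ => (t, y))
  have E1 : ∀ t, ∫ x, φt t x * β (U t x) = ∫ v, (∫ x in X t v..R, φt t x) ∂m := by
    intro t
    have := hνp t
    simp_rw [← hν t]
    rw [aux_fub (hct1 t) (fun x hx => (hz t x (Or.inr hx)).2), integral_map (hXt t).aemeasurable]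
    exact (hΦt.comp (by fun_prop : Continuous fun y : ℝ => (t, y))).aestronglyMeasurable
  have E2 : ∫ x, φ 0 x * β (U 0 x) = ∫ v, (∫ x in X 0 v..R, φ 0 x) ∂m := by
    have := hνp 0
    simp_rw [← hν 0]
    rw [aux_fub (hc1 0) (fun x hx => (hz 0 x (Or.inr hx)).1), integral_map (hXt 0).aemeasurable]
    exact (hΦ.comp (by fun_prop : Continuous fun y : ℝ => ((0:ℝ), y))).aestronglyMeasurable
  have E3 : ∀ t, ∫ x, φ t x * G t x ∂(m.map (X t)) = ∫ v, φ t (X t v) * G t (X t v) ∂m := by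
    intro t
    rw [integral_map (hXt t).aemeasurable]
    exact ((hc1 t).measurable.mul (hGm.comp measurable_prodMk_left)).aestronglyMeasurable
  have red : ∀ A : ℝ → ℝ, (∀ t, R ≤ t → A t = 0) →
      ∫ t in Ici (0:ℝ), A t = ∫ t in Ioc 0 R, A t := by
    intro A hA
    rw [integral_Ici_eq_integral_Ioi]
    refine setIntegral_eq_of_subset_of_forall_sdiff_eq_zero measurableSet_Ioi
      Ioc_subset_Ioi_self ?_
    intro t ht
    refine hA t (le_of_lt ?_)
    by_contra hlt
    exact ht.2 ⟨ht.1, le_of_not_gt hlt⟩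
  rw [E2]
  simp_rw [E1, E3]
  rw [red, red]
  rotate_left
  · intro t ht
    simp [fun x => (hz t x (Or.inl (ht.trans (le_abs_self t)))).1]
  · intro t ht
    simp [fun x => (hz t x (Or.inl (ht.trans (le_abs_self t)))).2]
  have I1 : Integrable (fun p : ℝ × ℝ => ∫ x in X p.1 p.2..R, φt p.1 x)
      ((volume.restrict (Ioc 0 R)).prod m) := by
    refine Integrable.of_bound (C := ∫ x in Icc (-R) R, C) ?_ (Eventually.of_forall fun p => ?_)
    · exact (hΦt.measurable.comp (measurable_fst.prodMk hXm)).aestronglyMeasurable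
    · exact aux_bd (fun x hx => (hz p.1 x (Or.inr hx)).2) (hbt p.1) _
  have hGX : Measurable (fun p : ℝ × ℝ => G p.1 (X p.1 p.2)) :=
    hGm.comp (measurable_fst.prodMk hXm)
  have I2 : Integrable (fun p : ℝ × ℝ => φ p.1 (X p.1 p.2) * G p.1 (X p.1 p.2))
      ((volume.restrict (Ioc 0 R)).prod m) := by
    refine Integrable.of_bound (C := C * M) ?_ (Eventually.of_forall fun p => ?_)
    · exact ((hc.measurable.comp (measurable_fst.prodMk hXm)).mul hGX).aestronglyMeasurable
    · rw [norm_mul]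
      exact mul_le_mul (hb _ _) (hG _ _) (norm_nonneg _) hC
  rw [← sub_eq_zero, add_sub_right_comm]
  rw [integral_integral_swap (f := fun t v => ∫ x in X t v..R, φt t x) I1,
    integral_integral_swap (f := fun t v => φ t (X t v) * G t (X t v)) I2,
    ← integral_sub I1.integral_prod_right I2.integral_prod_right]
  rw [add_eq_zero_iff_eq_neg, ← integral_neg]
  refine integral_congr_ae ?_
  filter_upwards [hmem, hmac.ae_le hchar, I1.prod_left_ae, I2.prod_left_ae] with v hv hcv i1 i2
  obtain ⟨⟨K, hK⟩, hint⟩ := hcv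
  have hXe : ∀ t, X t v = cdfInv (U t) v := fun t => by simp only [hX, if_pos hv]
  rw [← integral_sub i1 i2, ← intervalIntegral.integral_of_le hR.le]
  refine aux_chain h hR hz (X := fun t => X t v) (g := fun t => G t (X t v)) (K := K) ?_ ?_ ?_
  · simpa only [hXe] using hK
  · rw [intervalIntegrable_iff]
    refine Measure.integrableOn_of_bounded (M := M) (by simp) ?_ (Eventually.of_forall fun t => hG _ _)
    exact (hGX.comp measurable_prodMk_right).aestronglyMeasurable
  · intro t ht
    simpa only [hXe] using hint t ht

lemma aux_lam {d : ℕ} {lam : Fin d → (Fin d → ℝ) → ℝ} {γ : Fin d}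
    (hlam : ContinuousOn (lam γ) (Icc (0 : Fin d → ℝ) 1))
    {u : Fin d → ℝ → ℝ → ℝ}
    (hum : ∀ γ : Fin d, Measurable fun p : ℝ × ℝ => u γ p.1 p.2)
    (hu : ∀ (γ : Fin d) (t : ℝ), IsCDF (u γ t)) :
    Measurable (fun p : ℝ × ℝ => lamBrace lam u γ p.1 p.2) ∧
      ∃ M, ∀ t x, |lamBrace lam u γ t x| ≤ M := by
  obtain ⟨M, hM⟩ := isCompact_Icc.exists_bound_of_continuousOn hlam
  have hll : ∀ t x, Function.leftLim (u γ t) x ∈ Icc (0:ℝ) 1 := fun t x =>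
    ⟨(aux_cdf_mem (hu γ t) (x - 1)).1.trans ((hu γ t).1.le_leftLim (by linarith)),
      ((hu γ t).1.leftLim_le le_rfl).trans (aux_cdf_mem (hu γ t) x).2⟩
  have harg : ∀ t x, ∀ θ ∈ Icc (0:ℝ) 1, Function.update (fun γ' => u γ' t x) γ
      ((1 - θ) * Function.leftLim (u γ t) x + θ * u γ t x) ∈ Icc (0 : Fin d → ℝ) 1 := by
    intro t x θ hθ
    have hcv : (1 - θ) * Function.leftLim (u γ t) x + θ * u γ t x ∈ Icc (0:ℝ) 1 :=
      convex_Icc (0:ℝ) 1 (hll t x) (aux_cdf_mem (hu γ t) x) (by linarith [hθ.2]) hθ.1 (by ring)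
    have : ∀ i, Function.update (fun γ' => u γ' t x) γ
      ((1 - θ) * Function.leftLim (u γ t) x + θ * u γ t x) i ∈ Icc (0:ℝ) 1 := by
      intro i
      by_cases hi : i = γ
      · subst hi; simpa using hcv
      · rw [Function.update_of_ne hi]; exact aux_cdf_mem (hu i t) x
    exact ⟨fun i => (this i).1, fun i => (this i).2⟩
  refine ⟨?_, M, fun t x => ?_⟩
  · set P : (Fin d → ℝ) → (Fin d → ℝ) := fun w i => max 0 (min 1 (w i)) with hP
    have hPc : Continuous P := by fun_prop
    have hPm : ∀ w, P w ∈ Icc (0 : Fin d → ℝ) 1 := fun w =>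
      ⟨fun i => le_max_left _ _, fun i => max_le zero_le_one (min_le_left _ _)⟩
    have hPe : ∀ w ∈ Icc (0 : Fin d → ℝ) 1, P w = w := by
      intro w hw
      ext i
      have h1 := hw.1 i
      have h2 := hw.2 i
      simp only [Pi.zero_apply, Pi.one_apply] at h1 h2
      simp [hP, h1, h2]
    have hL : Continuous (fun w => lam γ (P w)) := hlam.comp_continuous hPc hPm
    have hllm : Measurable (fun p : ℝ × ℝ => Function.leftLim (u γ p.1) p.2) := by
      refine measurable_of_tendsto_metrizable
        (f := fun (n : ℕ) (p : ℝ × ℝ) => u γ p.1 (p.2 - 1 / ((n:ℝ) + 1))) (fun n => ?_) ?_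
      · exact (hum γ).comp (by fun_prop : Measurable fun p : ℝ × ℝ => (p.1, p.2 - 1 / ((n:ℝ) + 1)))
      · rw [tendsto_pi_nhds]
        intro p
        refine ((hu γ p.1).1.tendsto_leftLim p.2).comp ?_
        refine tendsto_nhdsWithin_iff.mpr ⟨?_, Eventually.of_forall fun n => ?_⟩
        · simpa using (tendsto_const_nhds (x := p.2)).sub
            (tendsto_one_div_add_atTop_nhds_zero_nat (𝕜 := ℝ))
        · have : 0 < 1 / ((n:ℝ) + 1) := by positivity
          simp only [mem_Iio]; linarith
    have hmeas : Measurable (fun q : (ℝ × ℝ) × ℝ => lam γ (P (Function.update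
        (fun γ' => u γ' q.1.1 q.1.2) γ
        ((1 - q.2) * Function.leftLim (u γ q.1.1) q.1.2 + q.2 * u γ q.1.1 q.1.2)))) := by
      refine hL.measurable.comp (measurable_pi_iff.mpr fun i => ?_)
      by_cases hi : i = γ
      · subst hi
        simp only [Function.update_self]
        have a1 := hllm.comp (measurable_fst : Measurable (Prod.fst : (ℝ × ℝ) × ℝ → ℝ × ℝ))
        have a2 := (hum i).comp (measurable_fst : Measurable (Prod.fst : (ℝ × ℝ) × ℝ → ℝ × ℝ))
        exact ((measurable_const.sub measurable_snd).mul a1).add (measurable_snd.mul a2)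
      · simp only [Function.update_of_ne hi]
        exact (hum i).comp (measurable_fst : Measurable (Prod.fst : (ℝ × ℝ) × ℝ → ℝ × ℝ))
    have := (hmeas.stronglyMeasurable.integral_prod_right'
      (ν := volume.restrict (Ioc (0:ℝ) 1))).measurable
    convert this using 1
    ext p
    unfold lamBrace
    rw [intervalIntegral.integral_of_le zero_le_one]
    refine setIntegral_congr_fun measurableSet_Ioc fun θ hθ => ?_
    simp only
    rw [hPe _ (harg p.1 p.2 θ (Ioc_subset_Icc_self hθ))]
  · have := intervalIntegral.norm_integral_le_of_norm_le_const (a := (0:ℝ)) (b := 1) (C := M)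
      (f := fun θ => lam γ (Function.update (fun γ' => u γ' t x) γ
      ((1 - θ) * Function.leftLim (u γ t) x + θ * u γ t x))) (fun θ hθ => by
        rw [uIoc_of_le zero_le_one] at hθ
        exact hM _ (harg t x θ (Ioc_subset_Icc_self hθ)))
    simpa [lamBrace] using this

/-- **Characteristics imply renormalisation**: if, for a.e. `v ∈ (0,1)`, the quantile
trajectory `t ↦ X_v^γ(t)` is Lipschitz on `[0,∞)` and satisfies
`X_v^γ(t₂) − X_v^γ(t₁) = ∫_{t₁}^{t₂} λ^γ{u}(s, X_v^γ(s)) ds`, then `u` is a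
renormalised solution in the `γ`-th coordinate. -/
theorem characteristics_imply_renormalised {d : ℕ} (hd : 1 ≤ d)
    (lam : Fin d → (Fin d → ℝ) → ℝ)
    (hlam : ∀ γ : Fin d, ContinuousOn (lam γ) (Icc (0 : Fin d → ℝ) 1))
    (u : Fin d → ℝ → ℝ → ℝ) (u0 : Fin d → ℝ → ℝ)
    (hsol : IsProbSol lam u u0)
    (hinit : ∀ (γ : Fin d) (x : ℝ), u γ 0 x = u0 γ x)
    (hL1 : ContL1loc u)
    (γ : Fin d)
    (hchar : ∀ᵐ v ∂(volume.restrict (Ioo (0:ℝ) 1)),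
      (∃ K : NNReal, LipschitzOnWith K (fun t => cdfInv (u γ t) v) (Ici 0)) ∧
      ∀ t₁ t₂ : ℝ, 0 ≤ t₁ → t₁ ≤ t₂ →
        cdfInv (u γ t₂) v - cdfInv (u γ t₁) v
          = ∫ s in t₁..t₂, lamBrace lam u γ s (cdfInv (u γ s) v)) :
    IsRenormalised lam u u0 γ := by
  obtain ⟨hum, hcdf, hcdf0, -⟩ := hsol
  set w : Fin d → ℝ → ℝ → ℝ := fun γ t x => u γ (max t 0) x with hw
  have hwu : ∀ γ t, 0 ≤ t → w γ t = u γ t := by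
    intro γ t ht
    ext x
    simp only [hw, max_eq_left ht]
  have hlw : ∀ t, 0 ≤ t → ∀ x, lamBrace lam w γ t x = lamBrace lam u γ t x := by
    intro t ht x
    unfold lamBrace
    simp only [hwu _ t ht]
  have hwm : ∀ γ : Fin d, Measurable fun p : ℝ × ℝ => w γ p.1 p.2 := by
    intro γ
    have hmk : Measurable (fun p : ℝ × ℝ =>
        ((⟨max p.1 0, mem_Ici.mpr (le_max_right _ _)⟩ : Ici (0:ℝ)), p.2)) :=
      ((measurable_fst.max measurable_const).subtype_mk).prodMk measurable_snd
    exact (hum γ).comp hmk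
  have hwc : ∀ (γ : Fin d) (t : ℝ), IsCDF (w γ t) := fun γ t => hcdf γ _ (le_max_right _ _)
  obtain ⟨hGm, M, hGM⟩ := aux_lam (hlam γ) hwm hwc
  intro β hβ hmono h0 h1 φ φt hφ
  obtain ⟨ν, hν1, hν2, hν3⟩ := aux_core (U := w γ) (G := lamBrace lam w γ) (hwc γ) (hwm γ) hGm hGM
    (by
      filter_upwards [hchar] with v hv
      obtain ⟨⟨K, hK⟩, hint⟩ := hv
      constructor
      · have hmax : LipschitzWith 1 (fun t : ℝ => max t 0) := LipschitzWith.id.max_const 0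
        have := hK.comp (g := fun t => cdfInv (u γ t) v) (s := univ)
          (hmax.lipschitzOnWith (s := univ)) (fun t _ => le_max_right t 0)
        exact ⟨_, lipschitzOnWith_univ.mp this⟩
      · intro t ht
        rw [hwu γ t ht, hwu γ 0 le_rfl, hint 0 t le_rfl ht]
        refine intervalIntegral.integral_congr fun s hs => ?_
        rw [uIcc_of_le ht] at hs
        rw [hwu γ s hs.1, hlw s hs.1]) hβ hmono h0 h1 hφ
  refine ⟨ν, hν1, fun t ht x => by rw [hν2, hwu γ t ht], ?_⟩
  have e1 : ∫ t in Ici (0:ℝ), ∫ x : ℝ, φt t x * β (u γ t x)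
      = ∫ t in Ici (0:ℝ), ∫ x : ℝ, φt t x * β (w γ t x) :=
    setIntegral_congr_fun measurableSet_Ici fun t ht => by simp only [hwu γ t ht]
  have e2 : ∫ t in Ici (0:ℝ), ∫ x : ℝ, φ t x * lamBrace lam u γ t x ∂(ν t)
      = ∫ t in Ici (0:ℝ), ∫ x : ℝ, φ t x * lamBrace lam w γ t x ∂(ν t) :=
    setIntegral_congr_fun measurableSet_Ici fun t ht => by simp only [hlw t ht]
  have e3 : ∫ x : ℝ, φ 0 x * β (u0 γ x) = ∫ x : ℝ, φ 0 x * β (w γ 0 x) := by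
    simp only [hwu γ 0 le_rfl, hinit]
  rw [e1, e2, e3, hν3]
end
end
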